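/- Let Ω ⊂ ℝ^N (N ≥ 3) be a bounded open set with C² boundary and suppose Φ, Φ₀, G, K, W := Φ/Φ₀ satisfy all of the hypotheses (H1)–(H7) listed in the context. Let τ be a positive Borel measure on Ω with ∫_Ω Φ dτ < ∞, let ν be a finite positive Borel measure on ∂Ω, and let u : Ω → [0,∞) be a Borel function such that u(x) + ∫_Ω G(x,y) dτ(y) = ∫_{∂Ω} K(x,y) dν(y) for every x ∈ Ω. Then there exists C ≥ 1, independent of u, τ, ν, such that C⁻¹ ν(∂Ω) ≤ ∫_Ω W(x) u(x) dx + ∫_Ω Φ dτ ≤ C ν(∂Ω). -/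

import Mathlib

open MeasureTheory Metric Set ENNReal

/-- `Ω` has `C²` boundary: near each boundary point, `Ω` coincides with the strict
sublevel set of a `C²` function with nonvanishing derivative. -/
def HasC2Boundary {N : ℕ} (Ω : Set (EuclideanSpace ℝ (Fin N))) : Prop :=
  ∀ p ∈ frontier Ω, ∃ (U : Set (EuclideanSpace ℝ (Fin N)))
    (f : EuclideanSpace ℝ (Fin N) → ℝ),
    IsOpen U ∧ p ∈ U ∧ ContDiffOn ℝ 2 f U ∧ (∀ x ∈ U, fderiv ℝ f x ≠ 0) ∧
    Ω ∩ U = {x ∈ U | f x < 0}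

open scoped NNReal

/-- An open set contains every ball around one of its points that misses its frontier. -/
theorem ball_infDist_frontier_subset {E : Type*} [NormedAddCommGroup E] [NormedSpace ℝ E]
    {Ω : Set E} {x : E} (hx : x ∈ Ω) :
    ball x (infDist x (frontier Ω)) ⊆ Ω := by
  rcases (infDist_nonneg (x := x) (s := frontier Ω)).eq_or_lt with h0 | h0
  · simp [← h0]
  have hdisj : ∀ z ∈ ball x (infDist x (frontier Ω)), z ∉ frontier Ω := fun z hz hzf => by
    have := infDist_le_dist_of_mem (x := x) hzf
    rw [mem_ball, dist_comm] at hz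
    linarith
  refine ((convex_ball x _).isPreconnected.subset_left_of_subset_union isOpen_interior
    (isClosed_closure (s := Ω)).isOpen_compl ?_ (fun z hz => ?_) ⟨x, mem_ball_self h0, ?_⟩).trans
      interior_subset
  · exact disjoint_compl_right_iff_subset.2 (interior_subset.trans subset_closure)
  · by_contra h
    simp only [mem_union, mem_compl_iff, not_or, not_not] at h
    exact hdisj z hz ⟨h.2, h.1⟩
  · by_contra h
    exact hdisj x (mem_ball_self h0) ⟨subset_closure hx, h⟩

theorem infDist_frontier_pos {E : Type*} [NormedAddCommGroup E] [NormedSpace ℝ E]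
    {Ω : Set E} (ho : IsOpen Ω) (hne : (frontier Ω).Nonempty) {x : E} (hx : x ∈ Ω) :
    0 < infDist x (frontier Ω) := by
  rw [← isClosed_frontier.notMem_iff_infDist_pos hne]
  intro h
  rw [ho.frontier_eq] at h
  exact h.2 hx

/-- Near a boundary point, a `C²` domain contains a family of open cones with vertices in its
closure, of any aperture less than that of a half-space. -/
theorem HasC2Boundary.exists_cone {N : ℕ} {Ω : Set (EuclideanSpace ℝ (Fin N))}
    (h2 : HasC2Boundary Ω) {p : EuclideanSpace ℝ (Fin N)} (hp : p ∈ frontier Ω) :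
    ∃ L : EuclideanSpace ℝ (Fin N) →L[ℝ] ℝ, L ≠ 0 ∧ ∀ κ > 0, ∃ R > 0,
      ∀ x ∈ ball p R, x ∈ closure Ω → ∀ y ∈ ball p R, y ≠ x →
        L (y - x) ≤ -κ * ‖y - x‖ → y ∈ Ω := by
  obtain ⟨U, f, hU, hpU, hf, hf', hΩU⟩ := h2 p hp
  refine ⟨fderiv ℝ f p, hf' p hpU, fun κ hκ => ?_⟩
  have hst : HasStrictFDerivAt f (fderiv ℝ f p) p :=
    (hf.contDiffAt (hU.mem_nhds hpU)).hasStrictFDerivAt (by norm_num)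
  have h1 := hst.isLittleO.def (half_pos hκ)
  rw [nhds_prod_eq, Filter.eventually_prod_self_iff'] at h1
  obtain ⟨t, ht, h1⟩ := h1
  obtain ⟨R, hR, hRt⟩ := Metric.mem_nhds_iff.1 (Filter.inter_mem ht (hU.mem_nhds hpU))
  refine ⟨R, hR, fun x hx hxc y hy hne hL => ?_⟩
  have hfx : f x ≤ 0 := by
    have hxU := (hRt hx).2
    have hxc' : x ∈ closure (Ω ∩ U) := by
      rw [inter_comm]
      exact hU.inter_closure ⟨hxU, hxc⟩
    have hcont : ContinuousAt f x := (hf.contDiffAt (hU.mem_nhds hxU)).continuousAt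
    have := hcont.continuousWithinAt (s := Ω ∩ U) |>.mem_closure hxc' (t := Iic 0) (fun z hz => by
      rw [hΩU] at hz
      exact hz.2.le)
    simpa using this
  have h3 := h1 y (hRt hy).1 x (hRt hx).1
  simp only at h3
  have hpos : 0 < ‖y - x‖ := norm_pos_iff.2 (sub_ne_zero.2 hne)
  have h4 := (abs_le.1 h3).2
  have : y ∈ Ω ∩ U := by
    rw [hΩU]
    refine ⟨(hRt hy).2, ?_⟩
    nlinarith
  exact this.1

/-- The distance to the boundary grows linearly along the directions of an interior cone. -/
theorem infDist_frontier_add_le {E : Type*} [NormedAddCommGroup E] [NormedSpace ℝ E]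
    {Ω : Set E} (ho : IsOpen Ω) (hc : IsCompact (frontier Ω)) {p : E} (hp : p ∈ frontier Ω)
    {L : E →L[ℝ] ℝ} (hL : L ≠ 0) {κ r : ℝ} (hκ : 0 < κ)
    (hcone : ∀ x ∈ ball p (8 * r), x ∈ closure Ω → ∀ y ∈ ball p (8 * r), y ≠ x →
        L (y - x) ≤ -κ * ‖y - x‖ → y ∈ Ω)
    {x y : E} (hx : x ∈ ball p r) (hxΩ : x ∈ Ω) (hy : y ∈ ball p r)
    (hxy : L (y - x) ≤ -(2 * κ) * ‖y - x‖) :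
    infDist x (frontier Ω) + κ / (‖L‖ + κ) * ‖y - x‖ ≤ infDist y (frontier Ω) := by
  obtain ⟨q, hq, hyq⟩ := hc.exists_infDist_eq_dist ⟨p, hp⟩ y
  have hLpos : 0 < ‖L‖ := norm_pos_iff.2 hL
  set θ := κ / (‖L‖ + κ) with hθ
  have hθ0 : 0 < θ := by positivity
  have hθ1 : θ < 1 := by
    rw [hθ, div_lt_one (by positivity)]
    linarith
  have hθL : θ * (‖L‖ + κ) = κ := by
    rw [hθ]
    field_simp
  rcases eq_or_ne y x with rfl | hne
  · simp
  have hw : 0 < ‖y - x‖ := norm_pos_iff.2 (sub_ne_zero.2 hne)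
  have hδx := infDist_frontier_pos ho ⟨p, hp⟩ hxΩ
  by_contra hlt
  push Not at hlt
  have hqΩ : q ∉ Ω := by
    rw [ho.frontier_eq] at hq
    exact hq.2
  obtain ⟨u, hu, hzu⟩ : ∃ u : E, ‖u‖ ≤ θ * ‖y - x‖ ∧ ‖(y - q) - u‖ < infDist x (frontier Ω) := by
    rcases le_or_gt (dist y q) (θ * ‖y - x‖) with hd | hd
    · exact ⟨y - q, by rwa [← dist_eq_norm], by simpa using hδx⟩
    · have hd0 : 0 < dist y q := lt_trans (by positivity) hd
      have hn : ‖y - q‖ = dist y q := (dist_eq_norm _ _).symm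
      refine ⟨(θ * ‖y - x‖ / dist y q) • (y - q), ?_, ?_⟩
      · rw [norm_smul, hn, Real.norm_of_nonneg (by positivity)]
        field_simp
        exact le_refl _
      · have : (y - q) - (θ * ‖y - x‖ / dist y q) • (y - q)
            = (1 - θ * ‖y - x‖ / dist y q) • (y - q) := by module
        rw [this, norm_smul, hn, Real.norm_of_nonneg]
        · rw [sub_mul, one_mul, div_mul_cancel₀ _ hd0.ne']
          linarith
        · rw [sub_nonneg, div_le_one hd0]
          exact hd.le
  set v := (y - x) - u with hv
  have hv1 : ‖v‖ ≤ ‖y - x‖ + ‖u‖ := norm_sub_le _ _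
  have hv2 : ‖y - x‖ - ‖u‖ ≤ ‖v‖ := norm_sub_norm_le _ _
  have hθw : θ * ‖y - x‖ < ‖y - x‖ := by nlinarith
  have hv0 : 0 < ‖v‖ := by linarith
  have hLv : L v ≤ -κ * ‖v‖ := by
    have h1 : L v = L (y - x) - L u := by rw [hv, map_sub]
    have h2 : -(L u) ≤ ‖L‖ * ‖u‖ := (neg_le_abs _).trans (L.le_opNorm u)
    have h3 : (‖L‖ + κ) * ‖u‖ ≤ (‖L‖ + κ) * (θ * ‖y - x‖) := by gcongr
    have h4 : (‖L‖ + κ) * (θ * ‖y - x‖) = κ * ‖y - x‖ := by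
      rw [← mul_assoc, mul_comm _ θ, hθL]
    nlinarith
  have hq'' : q - v ∈ Ω := by
    apply ball_infDist_frontier_subset hxΩ
    rw [mem_ball, dist_comm, dist_eq_norm]
    have : x - (q - v) = y - q - u := by
      rw [hv]
      abel
    rwa [this]
  rw [mem_ball] at hx hy
  have hyx : ‖y - x‖ < 2 * r := by
    rw [← dist_eq_norm]
    have := dist_triangle_right y x p
    linarith
  have hyp : dist y q ≤ dist y p := hyq ▸ infDist_le_dist_of_mem hp
  have hqp : dist q p < 2 * r := by
    have := dist_triangle_left q p y
    linarith
  have hsub : q - (q - v) = v := by abel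
  refine hqΩ (hcone (q - v) ?_ (subset_closure hq'') q ?_ ?_ ?_)
  · rw [mem_ball]
    have h1 := dist_triangle (q - v) q p
    have h2 : dist (q - v) q = ‖v‖ := by rw [dist_comm, dist_eq_norm, hsub]
    linarith
  · rw [mem_ball]
    linarith [dist_nonneg (x := q) (y := p)]
  · intro h
    rw [← sub_eq_zero, hsub] at h
    simp [h] at hv0
  · rwa [hsub]

/-- Every boundary point of a `C²` domain is approached nontangentially from inside. -/
theorem HasC2Boundary.exists_dist_lt_two_mul_infDist {N : ℕ}
    {Ω : Set (EuclideanSpace ℝ (Fin N))} (h2 : HasC2Boundary Ω)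
    {p : EuclideanSpace ℝ (Fin N)} (hp : p ∈ frontier Ω) {η : ℝ} (hη : 0 < η) :
    ∃ x ∈ Ω, infDist x (frontier Ω) < η ∧ dist x p < 2 * infDist x (frontier Ω) := by
  obtain ⟨L, hL, hcone⟩ := h2.exists_cone hp
  have hLpos : 0 < ‖L‖ := norm_pos_iff.2 hL
  obtain ⟨R, hR, hcone⟩ := hcone (‖L‖ / 10) (by positivity)
  obtain ⟨e, he, hLe⟩ : ∃ e : EuclideanSpace ℝ (Fin N), ‖e‖ = 1 ∧ L e = -‖L‖ := by
    set g := (InnerProductSpace.toDual ℝ (EuclideanSpace ℝ (Fin N))).symm L with hg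
    have hgn : ‖g‖ = ‖L‖ := by simp [hg]
    have hLg : ∀ z, L z = inner ℝ g z := fun z => by
      rw [hg, InnerProductSpace.toDual_symm_apply]
    refine ⟨-(‖L‖⁻¹ • g), ?_, ?_⟩
    · rw [norm_neg, norm_smul, hgn, norm_inv, norm_norm, inv_mul_cancel₀ hLpos.ne']
    · rw [map_neg, map_smul, hLg, real_inner_self_eq_norm_sq, hgn, smul_eq_mul]
      field_simp
  obtain ⟨t, ht0, htR, htη⟩ : ∃ t : ℝ, 0 < t ∧ 2 * t < R ∧ t < η :=
    ⟨min R η / 3, by positivity, by linarith [min_le_left R η], by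
      linarith [min_le_right R η]⟩
  have hpc : p ∈ closure Ω := frontier_subset_closure hp
  have hball : ball (p + t • e) (2 / 3 * t) ⊆ Ω := by
    intro z hz
    set v := z - (p + t • e) with hv
    have hvn : ‖v‖ < 2 / 3 * t := by rwa [mem_ball, dist_eq_norm] at hz
    have hzp : z - p = t • e + v := by
      rw [hv]
      abel
    have hte : ‖t • e‖ = t := by rw [norm_smul, he, Real.norm_of_nonneg ht0.le, mul_one]
    have h1 : ‖z - p‖ ≤ t + ‖v‖ := by
      rw [hzp]
      exact (norm_add_le _ _).trans_eq (by rw [hte])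
    have h2 : t - ‖v‖ ≤ ‖z - p‖ := by
      have := norm_sub_le_norm_add (t • e) v
      rwa [hte, ← hzp] at this
    have h3 : L v ≤ ‖L‖ * ‖v‖ := (le_abs_self _).trans (L.le_opNorm v)
    refine hcone p (mem_ball_self hR) hpc z ?_ ?_ ?_
    · rw [mem_ball, dist_eq_norm]
      linarith
    · rintro rfl
      rw [sub_self, norm_zero] at h2
      linarith
    · rw [hzp, map_add, map_smul, hLe, smul_eq_mul, ← hzp]
      nlinarith
  have hxp : dist (p + t • e) p = t := by
    rw [dist_eq_norm, add_sub_cancel_left, norm_smul, he, Real.norm_of_nonneg ht0.le, mul_one]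
  have hx : p + t • e ∈ Ω := hball (mem_ball_self (by positivity))
  refine ⟨p + t • e, hx, ?_, ?_⟩
  · exact (infDist_le_dist_of_mem hp).trans_lt (by rwa [hxp])
  · have : 2 / 3 * t ≤ infDist (p + t • e) (frontier Ω) := by
      rw [le_infDist ⟨p, hp⟩]
      intro q hq
      by_contra h
      push Not at h
      have hqb : q ∈ interior Ω :=
        interior_maximal hball isOpen_ball (by rwa [mem_ball, dist_comm])
      exact hq.2 hqb
    rw [hxp]
    linarith

/-- The point of `ℝⁿ` obtained by forgetting the `i`-th coordinate. -/
def dropCoord {n : ℕ} (i : Fin (n + 1)) (x : EuclideanSpace ℝ (Fin (n + 1))) : Fin n → ℝ :=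
  fun j => x (i.succAbove j)

theorem dropCoord_lipschitz {n : ℕ} (i : Fin (n + 1)) : LipschitzWith 1 (dropCoord i) := by
  refine LipschitzWith.of_dist_le_mul fun x y => ?_
  rw [NNReal.coe_one, one_mul, dist_pi_le_iff dist_nonneg]
  intro j
  rw [dist_eq_norm, dist_eq_norm]
  exact PiLp.norm_apply_le (x - y) (i.succAbove j)

/-- Near a boundary point of a `C²` domain, all coordinates but one together with the distance to
the boundary form a bi-Lipschitz coordinate system. -/
theorem HasC2Boundary.exists_chart {n : ℕ} {Ω : Set (EuclideanSpace ℝ (Fin (n + 1)))}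
    (ho : IsOpen Ω) (hc : IsCompact (frontier Ω)) (h2 : HasC2Boundary Ω)
    {p : EuclideanSpace ℝ (Fin (n + 1))} (hp : p ∈ frontier Ω) :
    ∃ r > 0, ∃ i : Fin (n + 1), ∃ M : ℝ≥0, ∀ x ∈ Ω ∩ ball p r, ∀ y ∈ Ω ∩ ball p r,
      dist x y ≤ M * max (dist (dropCoord i x) (dropCoord i y))
        (dist (infDist x (frontier Ω)) (infDist y (frontier Ω))) := by
  obtain ⟨L, hL, hcone⟩ := h2.exists_cone hp
  have hLpos : 0 < ‖L‖ := norm_pos_iff.2 hL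
  obtain ⟨i, hi⟩ : ∃ i, L (EuclideanSpace.single i 1) ≠ 0 := by
    by_contra! h
    refine hL (ContinuousLinearMap.coe_injective
      ((EuclideanSpace.basisFun (Fin (n + 1)) ℝ).toBasis.ext fun i => ?_))
    simpa using h i
  set l := |L (EuclideanSpace.single i 1)| with hl
  have hl0 : 0 < l := abs_pos.2 hi
  obtain ⟨R, hR, hcone⟩ := hcone (l / 4) (by positivity)
  set θ := l / 4 / (‖L‖ + l / 4) with hθ
  have hθ0 : 0 < θ := by positivity
  refine ⟨R / 8, by positivity, i,
    Real.toNNReal (2 * n + 2 * n * ‖L‖ / l + θ⁻¹), fun x hx y hy => ?_⟩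
  rw [Real.coe_toNNReal _ (by positivity)]
  have hcone' : ∀ x ∈ ball p (8 * (R / 8)), x ∈ closure Ω → ∀ y ∈ ball p (8 * (R / 8)), y ≠ x →
      L (y - x) ≤ -(l / 4) * ‖y - x‖ → y ∈ Ω := by
    rwa [mul_div_cancel₀ R (by norm_num : (8 : ℝ) ≠ 0)]
  set D := dist (dropCoord i x) (dropCoord i y) with hD
  set d := dist (infDist x (frontier Ω)) (infDist y (frontier Ω)) with hd
  have hD0 : 0 ≤ D := dist_nonneg
  have hd0 : 0 ≤ d := dist_nonneg
  have hm1 : D ≤ max D d := le_max_left _ _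
  have hm2 : d ≤ max D d := le_max_right _ _
  suffices h : dist x y ≤ (2 * n + 2 * n * ‖L‖ / l) * D + θ⁻¹ * d by
    refine h.trans ?_
    rw [add_mul _ θ⁻¹]
    exact add_le_add (mul_le_mul_of_nonneg_left hm1 (by positivity))
      (mul_le_mul_of_nonneg_left hm2 (by positivity))
  rw [dist_eq_norm]
  set w := x - y with hw
  rcases le_or_gt (2 * (l / 4) * ‖w‖) |L w| with hLw | hLw
  · have key : θ * ‖w‖ ≤ d := by
      rcases le_abs.1 hLw with h | h
      · have h' : L (y - x) ≤ -(2 * (l / 4)) * ‖y - x‖ := by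
          rw [← neg_sub x y, map_neg, norm_neg]
          linarith
        have := infDist_frontier_add_le ho hc hp hL (by positivity) hcone' hx.2 hx.1 hy.2 h'
        rw [norm_sub_rev] at this
        rw [hd, dist_comm, Real.dist_eq]
        exact (by linarith : θ * ‖w‖ ≤ _).trans (le_abs_self _)
      · have h' : L (x - y) ≤ -(2 * (l / 4)) * ‖x - y‖ := by linarith
        have := infDist_frontier_add_le ho hc hp hL (by positivity) hcone' hy.2 hy.1 hx.2 h'
        rw [hd, Real.dist_eq]
        exact (by linarith : θ * ‖w‖ ≤ _).trans (le_abs_self _)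
    have : ‖w‖ ≤ θ⁻¹ * d := by
      rw [inv_mul_eq_div, le_div_iff₀ hθ0]
      linarith
    have h0 : 0 ≤ (2 * n + 2 * n * ‖L‖ / l) * D := by positivity
    linarith
  · have hj : ∀ j, |w (i.succAbove j)| ≤ D := fun j => by
      rw [hD, ← Real.norm_eq_abs, hw]
      exact (dist_eq_norm (dropCoord i x j) (dropCoord i y j)) ▸
        dist_le_pi_dist (dropCoord i x) (dropCoord i y) j
    have hwsum : w = w i • EuclideanSpace.single i (1 : ℝ) +
        ∑ j, w (i.succAbove j) • EuclideanSpace.single (i.succAbove j) (1 : ℝ) := by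
      rw [← Fin.sum_univ_succAbove (fun k => w k • EuclideanSpace.single k (1 : ℝ)) i]
      simpa using ((EuclideanSpace.basisFun (Fin (n + 1)) ℝ).sum_repr w).symm
    set s := ∑ j, w (i.succAbove j) • EuclideanSpace.single (i.succAbove j) (1 : ℝ) with hs
    have hsn : ‖s‖ ≤ n * D := by
      refine (norm_sum_le _ _).trans ?_
      refine (Finset.sum_le_card_nsmul _ _ D fun j _ => ?_).trans_eq (by simp)
      rw [norm_smul, PiLp.norm_single, norm_one, mul_one]
      exact hj j
    have hwn : ‖w‖ ≤ |w i| + n * D := by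
      conv_lhs => rw [hwsum]
      refine (norm_add_le _ _).trans (add_le_add ?_ hsn)
      rw [norm_smul, PiLp.norm_single, norm_one, mul_one, Real.norm_eq_abs]
    have hLs : |L s| ≤ ‖L‖ * (n * D) := (L.le_opNorm s).trans (by gcongr)
    have hwi : |w i| * l ≤ |L w| + |L s| := by
      have : w i * L (EuclideanSpace.single i 1) = L w - L s := by
        conv_rhs => rw [hwsum]
        simp
      rw [hl, ← abs_mul, this]
      exact abs_sub _ _
    have h1 : |w i| * l ≤ l / 2 * (|w i| + n * D) + ‖L‖ * (n * D) := by
      have : l / 2 * ‖w‖ ≤ l / 2 * (|w i| + n * D) := by gcongr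
      linarith
    have h2 : |w i| ≤ n * D + 2 * n * ‖L‖ / l * D := by
      rw [← sub_nonneg]
      have : n * D + 2 * n * ‖L‖ / l * D - |w i| =
          2 / l * (l / 2 * (|w i| + n * D) + ‖L‖ * (n * D) - |w i| * l) := by
        field_simp
        ring
      rw [this]
      exact mul_nonneg (by positivity) (by linarith)
    have h0 : 0 ≤ θ⁻¹ * d := by positivity
    linarith

/-- A map that does not contract distances by more than a factor `K` on `U` does not shrink
Hausdorff measures by more than the corresponding factor. -/
theorem map_restrict_hausdorffMeasure_le {X Y : Type*} [MetricSpace X] [MeasurableSpace X]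
    [BorelSpace X] [MetricSpace Y] [MeasurableSpace Y] [BorelSpace Y] {φ : X → Y}
    (hφ : Measurable φ) {U : Set X} {K : ℝ≥0} {d : ℝ} (hd : 0 ≤ d)
    (h : ∀ x ∈ U, ∀ y ∈ U, edist x y ≤ K * edist (φ x) (φ y)) :
    (μH[d].restrict U).map φ ≤ (K : ℝ≥0∞) ^ d • (μH[d].restrict (φ '' U)) := by
  rw [Measure.le_iff]
  intro B hB
  rw [Measure.map_apply hφ hB, Measure.restrict_apply (hφ hB), Measure.smul_apply,
    Measure.restrict_apply hB, smul_eq_mul]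
  rcases isEmpty_or_nonempty X with hX | hX
  · rw [eq_empty_of_isEmpty (φ ⁻¹' B ∩ U), measure_empty]
    exact zero_le
  have hinj : InjOn φ U := fun x hx y hy hxy => by
    have := h x hx y hy
    rw [hxy, edist_self, mul_zero] at this
    exact edist_le_zero.1 this
  have hg : LipschitzOnWith K (Function.invFunOn φ U) (φ '' U) := by
    rintro _ ⟨x, hx, rfl⟩ _ ⟨y, hy, rfl⟩
    rw [hinj.leftInvOn_invFunOn hx, hinj.leftInvOn_invFunOn hy]
    exact h x hx y hy
  have himg : φ ⁻¹' B ∩ U = Function.invFunOn φ U '' (B ∩ φ '' U) := by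
    ext x
    constructor
    · rintro ⟨hxB, hxU⟩
      exact ⟨φ x, ⟨hxB, x, hxU, rfl⟩, hinj.leftInvOn_invFunOn hxU⟩
    · rintro ⟨_, ⟨hB', y, hy, rfl⟩, rfl⟩
      rw [hinj.leftInvOn_invFunOn hy]
      exact ⟨hB', hy⟩
  rw [himg]
  exact (hg.mono inter_subset_right).hausdorffMeasure_image_le hd

/-- A map that is Lipschitz on `U` does not enlarge Hausdorff measures by more than the
corresponding factor. -/
theorem restrict_hausdorffMeasure_image_le {X Y : Type*} [MetricSpace X] [MeasurableSpace X]
    [BorelSpace X] [MetricSpace Y] [MeasurableSpace Y] [BorelSpace Y] {φ : X → Y}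
    (hφ : Measurable φ) {U : Set X} {K : ℝ≥0} {d : ℝ} (hd : 0 ≤ d)
    (h : LipschitzOnWith K φ U) :
    μH[d].restrict (φ '' U) ≤ (K : ℝ≥0∞) ^ d • ((μH[d].restrict U).map φ) := by
  rw [Measure.le_iff]
  intro B hB
  rw [Measure.smul_apply, Measure.map_apply hφ hB, Measure.restrict_apply (hφ hB),
    Measure.restrict_apply hB, smul_eq_mul]
  have himg : B ∩ φ '' U = φ '' (φ ⁻¹' B ∩ U) := by
    rw [image_preimage_inter]
  rw [himg]
  exact (h.mono inter_subset_right).hausdorffMeasure_image_le hd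

/-- Lebesgue measure and Hausdorff measure of full dimension are multiples of each other. -/
theorem exists_volume_le_hausdorffMeasure (n : ℕ) :
    ∃ c : ℝ≥0∞, c ≠ ⊤ ∧
      (volume : Measure (EuclideanSpace ℝ (Fin (n + 1)))) ≤ c • μH[(n : ℝ) + 1] ∧
      (μH[(n : ℝ) + 1] : Measure (EuclideanSpace ℝ (Fin (n + 1)))) ≤ c • volume := by
  have hH : (μH[(n : ℝ) + 1] : Measure (EuclideanSpace ℝ (Fin (n + 1)))).IsAddHaarMeasure := by
    simpa using isAddHaarMeasure_hausdorffMeasure (E := EuclideanSpace ℝ (Fin (n + 1)))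
  have h1 := Measure.isAddLeftInvariant_eq_smul
    (volume : Measure (EuclideanSpace ℝ (Fin (n + 1)))) μH[(n : ℝ) + 1]
  have h2 := Measure.isAddLeftInvariant_eq_smul
    (μH[(n : ℝ) + 1] : Measure (EuclideanSpace ℝ (Fin (n + 1)))) volume
  refine ⟨((Measure.addHaarScalarFactor volume (μH[(n : ℝ) + 1] :
      Measure (EuclideanSpace ℝ (Fin (n + 1)))) + Measure.addHaarScalarFactor (μH[(n : ℝ) + 1] :
      Measure (EuclideanSpace ℝ (Fin (n + 1)))) volume : ℝ≥0) : ℝ≥0∞), coe_ne_top,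
    h1.le.trans (Measure.le_iff.2 fun s _ => ?_), h2.le.trans (Measure.le_iff.2 fun s _ => ?_)⟩
  · simp only [Measure.smul_apply, smul_eq_mul, ENNReal.smul_def]
    gcongr
    exact le_self_add
  · simp only [Measure.smul_apply, smul_eq_mul, ENNReal.smul_def]
    gcongr
    exact le_add_self

/-- Coordinates in which the `i`-th coordinate is replaced by the function `δ`. -/
def replaceCoord {n : ℕ} (i : Fin (n + 1)) (δ : EuclideanSpace ℝ (Fin (n + 1)) → ℝ)
    (x : EuclideanSpace ℝ (Fin (n + 1))) : Fin (n + 1) → ℝ :=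
  i.insertNth (α := fun _ => ℝ) (δ x) (dropCoord i x)

theorem edist_replaceCoord {n : ℕ} (i : Fin (n + 1)) (δ : EuclideanSpace ℝ (Fin (n + 1)) → ℝ)
    (x y : EuclideanSpace ℝ (Fin (n + 1))) :
    edist (replaceCoord i δ x) (replaceCoord i δ y) =
      max (edist (δ x) (δ y)) (edist (dropCoord i x) (dropCoord i y)) := by
  have h : nndist (replaceCoord i δ x) (replaceCoord i δ y) =
      max (nndist (δ x) (δ y)) (nndist (dropCoord i x) (dropCoord i y)) :=
    Fin.nndist_insertNth_insertNth (α := fun _ => ℝ) i (δ x) (δ y) (dropCoord i x) (dropCoord i y)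
  rw [edist_nndist, edist_nndist, edist_nndist, h, ENNReal.coe_max]

theorem lintegral_eq_lintegral_slice {n : ℕ} (i : Fin (n + 1))
    {F : (Fin (n + 1) → ℝ) → ℝ≥0∞} (hF : Measurable F) :
    ∫⁻ z, F z = ∫⁻ β, ∫⁻ z, F ((MeasurableEquiv.piFinSuccAbove (fun _ => ℝ) i).symm (β, z)) := by
  have h := (volume_preserving_piFinSuccAbove (fun _ => ℝ) i).symm
  rw [← h.lintegral_comp hF, Measure.volume_eq_prod]
  exact lintegral_prod (fun a => F ((MeasurableEquiv.piFinSuccAbove (fun _ => ℝ) i).symm a))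
    (hF.comp (MeasurableEquiv.measurable _)).aemeasurable

/-- A coarea-type estimate for a Lipschitz function `δ` that completes the coordinates other than
the `i`-th one to bi-Lipschitz coordinates on `U`. The function `h` is a measurable substitute for
the integral of `f` over the level sets of `δ`. -/
theorem exists_slice_of_chart {n : ℕ} {i : Fin (n + 1)}
    {δ : EuclideanSpace ℝ (Fin (n + 1)) → ℝ} (hδ : LipschitzWith 1 δ)
    {U : Set (EuclideanSpace ℝ (Fin (n + 1)))} (hU : MeasurableSet U) {M : ℝ≥0}
    (hM : ∀ x ∈ U, ∀ y ∈ U,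
      dist x y ≤ M * max (dist (dropCoord i x) (dropCoord i y)) (dist (δ x) (δ y))) :
    ∃ C : ℝ≥0∞, C ≠ ⊤ ∧
      (∀ f : EuclideanSpace ℝ (Fin (n + 1)) → ℝ≥0∞, Measurable f →
        ∃ h : ℝ → ℝ≥0∞, Measurable h ∧
          (∀ β, h β ≤ C * ∫⁻ x in U ∩ {x | δ x = β}, f x ∂μH[n]) ∧
          (∀ β, ∫⁻ x in U ∩ {x | δ x = β}, f x ∂μH[n] ≤ C * h β) ∧
          (∫⁻ x in U, f x ≤ C * ∫⁻ β, h β) ∧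
          (∫⁻ β, h β ≤ C * ∫⁻ x in U, f x)) ∧
      ∀ g : (Fin n → ℝ) → ℝ≥0∞, Measurable g → ∀ β,
        ∫⁻ x in U ∩ {x | δ x = β}, g (dropCoord i x) ∂μH[n] ≤
          C * ∫⁻ z in dropCoord i '' U, g z := by
  set ψ := replaceCoord i δ with hψ
  set T := dropCoord i with hT
  set e := (MeasurableEquiv.piFinSuccAbove (fun _ : Fin (n + 1) => ℝ) i).symm with he
  have hTl : LipschitzWith 1 T := dropCoord_lipschitz i
  have hTm : Measurable T := hTl.continuous.measurable
  have hψl : LipschitzWith 1 ψ := fun x y => by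
    rw [hψ, edist_replaceCoord]
    exact max_le (hδ x y) (hTl x y)
  have hψm : Measurable ψ := hψl.continuous.measurable
  have hM' : ∀ x ∈ U, ∀ y ∈ U, edist x y ≤ M * edist (ψ x) (ψ y) := fun x hx y hy => by
    have h1 : nndist x y ≤ M * max (nndist (T x) (T y)) (nndist (δ x) (δ y)) := by
      rw [← NNReal.coe_le_coe]
      push_cast
      exact hM x hx y hy
    rw [hψ, edist_replaceCoord, max_comm, edist_nndist, edist_nndist, edist_nndist]
    exact_mod_cast h1
  have hMT : ∀ β, ∀ x ∈ U ∩ {x | δ x = β}, ∀ y ∈ U ∩ {x | δ x = β},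
      edist x y ≤ M * edist (T x) (T y) := fun β x hx y hy => by
    have := hM' x hx.1 y hy.1
    rw [hψ, edist_replaceCoord, hx.2, hy.2, edist_self] at this
    simpa using this
  have hn0 : (0 : ℝ) ≤ n := Nat.cast_nonneg n
  have hvn : (μH[(n : ℝ)] : Measure (Fin n → ℝ)) = volume := by
    simpa using hausdorffMeasure_pi_real (ι := Fin n)
  have hvn1 : (μH[(n : ℝ) + 1] : Measure (Fin (n + 1) → ℝ)) = volume := by
    simpa using hausdorffMeasure_pi_real (ι := Fin (n + 1))
  have hT1 : ∀ β, (μH[n].restrict (U ∩ {x | δ x = β})).map T ≤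
      (M : ℝ≥0∞) ^ (n : ℝ) • volume.restrict (T '' (U ∩ {x | δ x = β})) := fun β => by
    rw [← hvn]
    exact map_restrict_hausdorffMeasure_le hTm hn0 (hMT β)
  have hT2 : ∀ β, volume.restrict (T '' (U ∩ {x | δ x = β})) ≤
      (μH[n].restrict (U ∩ {x | δ x = β})).map T := fun β => by
    rw [← hvn]
    simpa using restrict_hausdorffMeasure_image_le hTm hn0
      (hTl.lipschitzOnWith (s := U ∩ {x | δ x = β}))
  have hψ1 : (μH[(n : ℝ) + 1].restrict U).map ψ ≤
      (M : ℝ≥0∞) ^ ((n : ℝ) + 1) • volume.restrict (ψ '' U) := by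
    rw [← hvn1]
    exact map_restrict_hausdorffMeasure_le hψm (by positivity) hM'
  have hψ2 : volume.restrict (ψ '' U) ≤ (μH[(n : ℝ) + 1].restrict U).map ψ := by
    rw [← hvn1]
    simpa using restrict_hausdorffMeasure_image_le hψm (by positivity)
      (hψl.lipschitzOnWith (s := U)) (d := (n : ℝ) + 1)
  obtain ⟨c, hc, hc1, hc2⟩ := exists_volume_le_hausdorffMeasure n
  set C := 1 + (M : ℝ≥0∞) ^ (n : ℝ) + c + c * (M : ℝ≥0∞) ^ ((n : ℝ) + 1) with hC
  have hC1 : 1 ≤ C := by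
    rw [hC, add_assoc, add_assoc]
    exact le_self_add
  have hCn : (M : ℝ≥0∞) ^ (n : ℝ) ≤ C := by
    rw [hC, add_assoc, add_right_comm]
    exact le_add_self
  have hCc : c ≤ C := by
    rw [hC, add_right_comm]
    exact le_add_self
  have hCM : c * (M : ℝ≥0∞) ^ ((n : ℝ) + 1) ≤ C := le_add_self
  refine ⟨C, ?_, fun f hf => ?_, fun g hg β => ?_⟩
  · have h1 : (M : ℝ≥0∞) ^ (n : ℝ) ≠ ⊤ := rpow_ne_top_of_nonneg hn0 coe_ne_top
    have h2 : (M : ℝ≥0∞) ^ ((n : ℝ) + 1) ≠ ⊤ := rpow_ne_top_of_nonneg (by positivity) coe_ne_top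
    finiteness
  · have hinj : InjOn ψ U := fun x hx y hy hxy => by
      have := hM' x hx y hy
      rw [hxy, edist_self, mul_zero] at this
      exact edist_le_zero.1 this
    have hemb := hψl.continuous.continuousOn.measurableEmbedding hU hinj
    obtain ⟨F, hF, hFf⟩ := hemb.exists_measurable_extend
      (hf.comp measurable_subtype_coe) (fun _ => ⟨0⟩)
    have hFf' : ∀ x ∈ U, F (ψ x) = f x := fun x hx => congrFun hFf ⟨x, hx⟩
    have hψU : MeasurableSet (ψ '' U) := hU.image_of_continuousOn_injOn hψl.continuous.continuousOn
      hinj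
    set F₁ := (ψ '' U).indicator F with hF₁
    have hF₁m : Measurable F₁ := hF.indicator hψU
    have hem : Measurable e := MeasurableEquiv.measurable e
    have hF₁F : ∫⁻ z, F₁ z = ∫⁻ z in ψ '' U, F z := lintegral_indicator hψU _
    have hmap : ∫⁻ x in U, f x ∂μH[(n : ℝ) + 1] =
        ∫⁻ z, F z ∂((μH[(n : ℝ) + 1].restrict U).map ψ) := by
      rw [lintegral_map hF hψm]
      exact setLIntegral_congr_fun hU fun x hx => (hFf' x hx).symm
    have hvol : ∫⁻ β, ∫⁻ z, F₁ (e (β, z)) = ∫⁻ z in ψ '' U, F z := by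
      rw [← hF₁F, lintegral_eq_lintegral_slice i hF₁m]
    have hS : ∀ β, MeasurableSet (U ∩ {x | δ x = β}) := fun β =>
      hU.inter (hδ.continuous.measurable (measurableSet_singleton β))
    have hTS : ∀ β z, e (β, z) ∈ ψ '' U ↔ z ∈ T '' (U ∩ {x | δ x = β}) := fun β z => by
      constructor
      · rintro ⟨x, hx, hxz⟩
        have h1 : (δ x, T x) = (β, z) := e.injective hxz
        rw [Prod.mk.injEq] at h1
        exact ⟨x, ⟨hx, h1.1⟩, h1.2⟩
      · rintro ⟨x, ⟨hx, hxβ⟩, rfl⟩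
        exact ⟨x, hx, by rw [← hxβ, hψ]; rfl⟩
    have hTSm : ∀ β, MeasurableSet (T '' (U ∩ {x | δ x = β})) := fun β => by
      have : T '' (U ∩ {x | δ x = β}) = (fun z => e (β, z)) ⁻¹' (ψ '' U) := by
        ext z
        exact (hTS β z).symm
      rw [this]
      exact (hem.comp measurable_prodMk_left) hψU
    have hslice : ∀ β, ∫⁻ z, F₁ (e (β, z)) =
        ∫⁻ z in T '' (U ∩ {x | δ x = β}), F (e (β, z)) := fun β => by
      rw [← lintegral_indicator (hTSm β)]
      congr 1
      ext z
      by_cases h : z ∈ T '' (U ∩ {x | δ x = β})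
      · rw [indicator_of_mem h, hF₁, indicator_of_mem ((hTS β z).2 h)]
      · rw [indicator_of_notMem h, hF₁, indicator_of_notMem (fun h' => h ((hTS β z).1 h'))]
    have hmapS : ∀ β, ∫⁻ x in U ∩ {x | δ x = β}, f x ∂μH[n] =
        ∫⁻ z, F (e (β, z)) ∂((μH[n].restrict (U ∩ {x | δ x = β})).map T) := fun β => by
      rw [lintegral_map (f := fun z => F (e (β, z)))
        (hF.comp (hem.comp measurable_prodMk_left)) hTm]
      refine setLIntegral_congr_fun (hS β) fun x hx => ?_
      rw [← hFf' x hx.1, ← hx.2]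
      rfl
    refine ⟨fun β => ∫⁻ z, F₁ (e (β, z)),
      Measurable.lintegral_prod_right' (hF₁m.comp hem), fun β => ?_, fun β => ?_, ?_, ?_⟩
    · simp only [hslice, hmapS]
      exact (lintegral_mono' (hT2 β) le_rfl).trans (le_mul_of_one_le_left zero_le hC1)
    · simp only [hslice, hmapS]
      refine (lintegral_mono' (hT1 β) le_rfl).trans ?_
      rw [lintegral_smul_measure, smul_eq_mul]
      gcongr
    · rw [hvol]
      refine (lintegral_mono' (Measure.restrict_mono le_rfl hc1) le_rfl).trans ?_
      rw [Measure.restrict_smul, lintegral_smul_measure, hmap, smul_eq_mul]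
      refine le_trans (mul_le_mul_right (lintegral_mono' hψ1 le_rfl) c) ?_
      rw [lintegral_smul_measure, smul_eq_mul, ← mul_assoc]
      gcongr
    · rw [hvol]
      refine (lintegral_mono' hψ2 le_rfl).trans ?_
      rw [← hmap]
      refine (lintegral_mono' (Measure.restrict_mono le_rfl hc2) le_rfl).trans ?_
      rw [Measure.restrict_smul, lintegral_smul_measure, smul_eq_mul]
      gcongr
  · rw [← lintegral_map hg hTm]
    refine (lintegral_mono' (hT1 β) le_rfl).trans ?_
    rw [lintegral_smul_measure, smul_eq_mul]
    gcongr
    exact inter_subset_left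

/-- Negative powers of the distance of order less than the dimension are integrable on bounded
sets, uniformly in the pole. -/
theorem exists_setLIntegral_edist_rpow_le {F : Type*} [NormedAddCommGroup F] [NormedSpace ℝ F]
    [FiniteDimensional ℝ F] [MeasurableSpace F] [BorelSpace F] (μ : Measure F)
    [μ.IsAddHaarMeasure] (hF : 1 ≤ Module.finrank ℝ F) {s : ℝ} (hs : 0 < s)
    (hs' : s < Module.finrank ℝ F) {A : Set F} (hA : Bornology.IsBounded A) :
    ∃ C : ℝ≥0∞, C ≠ ⊤ ∧ ∀ y, ∫⁻ x in A, edist x y ^ (-s) ∂μ ≤ C := by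
  have : Nontrivial F := Module.finrank_pos_iff (R := ℝ).1 hF
  have hm : Measurable fun x : F => ‖x‖ ^ (-s) := measurable_norm.pow_const _
  have hloc : LocallyIntegrable (fun x : F => ‖x‖ ^ (-s)) μ :=
    locallyIntegrable_of_norm_le_rpow hF (C := 1) hs' (.of_forall fun x => by
      rw [one_mul, Real.norm_of_nonneg (Real.rpow_nonneg (norm_nonneg x) _)])
      hm.aestronglyMeasurable
  have hfin : ∫⁻ x in closedBall (0 : F) 1, ‖x‖ₑ ^ (-s) ∂μ ≠ ⊤ := by
    have h := (hloc.integrableOn_isCompact (isCompact_closedBall (0 : F) 1)).2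
    refine ne_of_lt (lt_of_le_of_lt (le_of_eq ?_) h)
    refine lintegral_congr_ae (ae_restrict_of_ae ?_)
    filter_upwards [measure_eq_zero_iff_ae_notMem.1 (measure_singleton (μ := μ) (0 : F))] with x hx
    have hx : 0 < ‖x‖ := norm_pos_iff.2 hx
    rw [Real.enorm_of_nonneg (Real.rpow_nonneg hx.le _), ← ENNReal.ofReal_rpow_of_pos hx,
      ofReal_norm]
  refine ⟨∫⁻ x in closedBall (0 : F) 1, ‖x‖ₑ ^ (-s) ∂μ + μ A,
    add_ne_top.2 ⟨hfin, hA.measure_lt_top.ne⟩, fun y => ?_⟩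
  set J : F → ℝ≥0∞ := (closedBall (0 : F) 1).indicator fun x => ‖x‖ₑ ^ (-s) with hJ
  have hle : ∀ x, edist x y ^ (-s) ≤ J (x - y) + 1 := fun x => by
    by_cases hx : x - y ∈ closedBall (0 : F) 1
    · rw [hJ, indicator_of_mem hx, edist_eq_enorm_sub]
      exact le_self_add
    · rw [hJ, indicator_of_notMem hx, zero_add]
      refine ENNReal.rpow_le_one_of_one_le_of_neg ?_ (neg_neg_of_pos hs)
      rw [edist_eq_enorm_sub, ← ofReal_norm, ← ofReal_one]
      refine ofReal_le_ofReal (le_of_lt ?_)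
      simpa using hx
  calc ∫⁻ x in A, edist x y ^ (-s) ∂μ ≤ ∫⁻ x in A, (J (x - y) + 1) ∂μ := lintegral_mono hle
    _ = ∫⁻ x in A, J (x - y) ∂μ + μ A := by
      rw [lintegral_add_right _ measurable_const, setLIntegral_one]
    _ ≤ ∫⁻ x, J (x - y) ∂μ + μ A := by
      gcongr
      exact Measure.restrict_le_self
    _ = ∫⁻ x in closedBall (0 : F) 1, ‖x‖ₑ ^ (-s) ∂μ + μ A := by
      rw [lintegral_sub_right_eq_self J, hJ, lintegral_indicator measurableSet_closedBall]

/-- Integrals over `Ω ∩ s` can be estimated by slicing along the level sets of `δ`, and the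
singular integrals of order `κ` over these level sets are bounded. -/
def HasSlices {n : ℕ} (δ : EuclideanSpace ℝ (Fin (n + 1)) → ℝ) (κ : ℝ)
    (Ω s : Set (EuclideanSpace ℝ (Fin (n + 1)))) : Prop :=
  ∃ M : ℝ≥0∞, M ≠ ⊤ ∧
    (∀ f : EuclideanSpace ℝ (Fin (n + 1)) → ℝ≥0∞, Measurable f →
      ∃ h : ℝ → ℝ≥0∞, Measurable h ∧
        (∀ β, h β ≤ M * ∫⁻ x in Ω ∩ {x | δ x = β}, f x ∂μH[n]) ∧
        (∀ β, ∫⁻ x in Ω ∩ s ∩ {x | δ x = β}, f x ∂μH[n] ≤ M * h β) ∧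
        (∫⁻ x in Ω ∩ s, f x ≤ M * ∫⁻ β, h β) ∧
        (∫⁻ β, h β ≤ M * ∫⁻ x in Ω, f x)) ∧
    ∀ y β, ∫⁻ x in Ω ∩ s ∩ {x | δ x = β}, edist x y ^ (-κ) ∂μH[n] ≤ M

theorem HasSlices.empty {n : ℕ} (δ : EuclideanSpace ℝ (Fin (n + 1)) → ℝ) (κ : ℝ)
    (Ω : Set (EuclideanSpace ℝ (Fin (n + 1)))) : HasSlices δ κ Ω ∅ :=
  ⟨0, zero_ne_top, fun _ _ => ⟨0, measurable_zero, by simp, by simp, by simp, by simp⟩, by simp⟩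

theorem HasSlices.union {n : ℕ} {δ : EuclideanSpace ℝ (Fin (n + 1)) → ℝ} {κ : ℝ}
    {Ω s t : Set (EuclideanSpace ℝ (Fin (n + 1)))} (hs : HasSlices δ κ Ω s)
    (ht : HasSlices δ κ Ω t) : HasSlices δ κ Ω (s ∪ t) := by
  obtain ⟨M, hM, hMf, hMy⟩ := hs
  obtain ⟨L, hL, hLf, hLy⟩ := ht
  have hu : ∀ β, Ω ∩ (s ∪ t) ∩ {x | δ x = β} =
      (Ω ∩ s ∩ {x | δ x = β}) ∪ (Ω ∩ t ∩ {x | δ x = β}) := fun β => by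
    rw [inter_union_distrib_left, union_inter_distrib_right]
  refine ⟨M + L, add_ne_top.2 ⟨hM, hL⟩, fun f hf => ?_, fun y β => ?_⟩
  · obtain ⟨h, hh, h1, h2, h3, h4⟩ := hMf f hf
    obtain ⟨k, hk, k1, k2, k3, k4⟩ := hLf f hf
    refine ⟨fun β => h β + k β, hh.add hk, fun β => ?_, fun β => ?_, ?_, ?_⟩
    · rw [add_mul]
      exact add_le_add (h1 β) (k1 β)
    · rw [hu]
      refine (lintegral_union_le _ _ _).trans ((add_le_add (h2 β) (k2 β)).trans ?_)
      rw [mul_add]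
      gcongr
      · exact le_self_add
      · exact le_add_self
    · rw [inter_union_distrib_left, lintegral_add_left hh]
      refine (lintegral_union_le _ _ _).trans ((add_le_add h3 k3).trans ?_)
      rw [mul_add]
      gcongr
      · exact le_self_add
      · exact le_add_self
    · rw [lintegral_add_left hh, add_mul]
      exact add_le_add h4 k4
  · rw [hu]
    exact (lintegral_union_le _ _ _).trans (add_le_add (hMy y β) (hLy y β))

/-- Near a boundary point, a set with `C²` boundary can be sliced along the level sets of the
distance to the boundary. -/
theorem HasC2Boundary.exists_hasSlices_ball {n : ℕ} {Ω : Set (EuclideanSpace ℝ (Fin (n + 1)))}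
    (ho : IsOpen Ω) (hc : IsCompact (frontier Ω)) (h2 : HasC2Boundary Ω)
    {p : EuclideanSpace ℝ (Fin (n + 1))} (hp : p ∈ frontier Ω) (hn : 1 ≤ n) {κ : ℝ}
    (hκ : 0 < κ) (hκn : κ < n) :
    ∃ r > 0, HasSlices (fun x => infDist x (frontier Ω)) κ Ω (ball p r) := by
  obtain ⟨r, hr, i, M, hM⟩ := h2.exists_chart ho hc hp
  have hU : MeasurableSet (Ω ∩ ball p r) := ho.measurableSet.inter measurableSet_ball
  obtain ⟨C, hC, hCf, hCg⟩ := exists_slice_of_chart (lipschitz_infDist_pt _) hU hM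
  have hb : Bornology.IsBounded (dropCoord i '' (Ω ∩ ball p r)) :=
    (dropCoord_lipschitz i).isBounded_image (isBounded_ball.subset inter_subset_right)
  obtain ⟨A, hA, hAy⟩ := exists_setLIntegral_edist_rpow_le (volume : Measure (Fin n → ℝ))
    (by simpa using hn) hκ (by simpa using hκn) hb
  have hCA : C ≤ C + C * A := le_self_add
  refine ⟨r, hr, C + C * A, by finiteness, fun f hf => ?_, fun y β => ?_⟩
  · obtain ⟨h, hh, h1, h2, h3, h4⟩ := hCf f hf
    refine ⟨h, hh, fun β => (h1 β).trans ?_, fun β => (h2 β).trans ?_, h3.trans ?_, h4.trans ?_⟩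
    · gcongr
      exact inter_subset_left
    · gcongr
    · gcongr
    · gcongr
      exact inter_subset_left
  · calc ∫⁻ x in Ω ∩ ball p r ∩ {x | infDist x (frontier Ω) = β}, edist x y ^ (-κ) ∂μH[n]
        ≤ ∫⁻ x in Ω ∩ ball p r ∩ {x | infDist x (frontier Ω) = β},
            edist (dropCoord i x) (dropCoord i y) ^ (-κ) ∂μH[n] := by
          refine lintegral_mono fun x => ?_
          rw [ENNReal.rpow_neg, ENNReal.rpow_neg, ENNReal.inv_le_inv]
          refine ENNReal.rpow_le_rpow ?_ hκ.le
          simpa using dropCoord_lipschitz i x y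
      _ ≤ C * ∫⁻ z in dropCoord i '' (Ω ∩ ball p r), edist z (dropCoord i y) ^ (-κ) :=
          hCg (fun z => edist z (dropCoord i y) ^ (-κ))
            ((measurable_edist_left).pow_const _) β
      _ ≤ C * A := by
          gcongr
          exact hAy _
      _ ≤ C + C * A := le_add_self

/-- A bounded set with `C²` boundary can be sliced along the level sets of the distance to the
boundary in a neighbourhood of the boundary. -/
theorem HasC2Boundary.exists_hasSlices {n : ℕ} {Ω : Set (EuclideanSpace ℝ (Fin (n + 1)))}
    (ho : IsOpen Ω) (hc : IsCompact (frontier Ω)) (hne : (frontier Ω).Nonempty)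
    (h2 : HasC2Boundary Ω) (hn : 1 ≤ n) {κ : ℝ} (hκ : 0 < κ) (hκn : κ < n) :
    ∃ r > 0, ∃ s, HasSlices (fun x => infDist x (frontier Ω)) κ Ω s ∧
      ∀ x, infDist x (frontier Ω) < r → x ∈ s := by
  obtain ⟨s, hso, hs, hsl⟩ : ∃ s, IsOpen s ∧ frontier Ω ⊆ s ∧
      HasSlices (fun x => infDist x (frontier Ω)) κ Ω s := by
    refine hc.induction_on (p := fun t => ∃ s, IsOpen s ∧ t ⊆ s ∧
      HasSlices (fun x => infDist x (frontier Ω)) κ Ω s) ?_ ?_ ?_ ?_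
    · exact ⟨∅, isOpen_empty, empty_subset _, HasSlices.empty _ _ _⟩
    · rintro t t' htt' ⟨s, hso, hs, hsl⟩
      exact ⟨s, hso, htt'.trans hs, hsl⟩
    · rintro t t' ⟨s, hso, hs, hsl⟩ ⟨s', hso', hs', hsl'⟩
      exact ⟨s ∪ s', hso.union hso', union_subset_union hs hs', hsl.union hsl'⟩
    · intro p hp
      obtain ⟨r, hr, hsl⟩ := h2.exists_hasSlices_ball ho hc hp hn hκ hκn
      exact ⟨ball p r, mem_nhdsWithin_of_mem_nhds (ball_mem_nhds p hr), ball p r, isOpen_ball,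
        Subset.rfl, hsl⟩
  obtain ⟨r, hr, hrs⟩ := hc.exists_thickening_subset_open hso hs
  refine ⟨r, hr, s, hsl, fun x hx => hrs ?_⟩
  rwa [mem_thickening_iff_infDist_lt hne]

theorem ContinuousOn.measurable_indicator {X Y : Type*} [TopologicalSpace X] [MeasurableSpace X]
    [OpensMeasurableSpace X] [TopologicalSpace Y] [MeasurableSpace Y] [BorelSpace Y] [Zero Y]
    {f : X → Y} {s : Set X} (hf : ContinuousOn f s) (hs : MeasurableSet s) :
    Measurable (s.indicator f) := by
  classical
  rw [← piecewise_eq_indicator]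
  exact hf.measurable_piecewise continuousOn_const hs

/-- Integrals of a function over the part of a sliced set near the boundary are bounded through its
integrals over the level sets. -/
theorem HasSlices.setLIntegral_le {n : ℕ} {δ : EuclideanSpace ℝ (Fin (n + 1)) → ℝ}
    (hδ : Measurable δ) {κ : ℝ} {Ω s : Set (EuclideanSpace ℝ (Fin (n + 1)))}
    (hΩ : MeasurableSet Ω) (hpos : ∀ x ∈ Ω, 0 < δ x) (h : HasSlices δ κ Ω s) :
    ∃ M : ℝ≥0∞, M ≠ ⊤ ∧ ∀ r, (∀ x, δ x < r → x ∈ s) →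
      (∀ (f : EuclideanSpace ℝ (Fin (n + 1)) → ℝ≥0∞) (w : ℝ → ℝ≥0∞), Measurable f →
        (∀ β ∈ Ioo 0 r, ∫⁻ x in Ω ∩ {x | δ x = β}, f x ∂μH[n] ≤ w β) →
        ∫⁻ x in Ω ∩ {x | δ x < r}, f x ≤ M * ∫⁻ β in Ioo 0 r, w β) ∧
      (∀ (f : EuclideanSpace ℝ (Fin (n + 1)) → ℝ≥0∞) (c : ℝ≥0∞), Measurable f →
        (∀ β ∈ Ioo 0 r, c ≤ ∫⁻ x in Ω ∩ {x | δ x = β}, f x ∂μH[n]) →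
        c * ENNReal.ofReal r ≤ M * ∫⁻ x in Ω, f x) ∧
      ∀ y, ∀ β ∈ Ioo 0 r, ∫⁻ x in Ω ∩ {x | δ x = β}, edist x y ^ (-κ) ∂μH[n] ≤ M := by
  obtain ⟨M, hM, hMf, hMy⟩ := h
  refine ⟨M * M + M, by finiteness, fun r hr => ⟨fun f w hf hw => ?_, fun f c hf hc => ?_,
    fun y β hβ => ?_⟩⟩
  · have hS : MeasurableSet {x | δ x < r} := measurableSet_lt hδ measurable_const
    obtain ⟨h, hh, h1, -, h3, -⟩ := hMf ({x | δ x < r}.indicator f) (hf.indicator hS)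
    have hle : ∀ β, h β ≤ (Ioo 0 r).indicator (fun β => M * w β) β := fun β => by
      refine (h1 β).trans ?_
      by_cases hβ : β ∈ Ioo 0 r
      · rw [indicator_of_mem hβ]
        gcongr
        refine le_trans (lintegral_mono fun x => ?_) (hw β hβ)
        exact indicator_le_self _ _ x
      · have : ∫⁻ x in Ω ∩ {x | δ x = β}, {x | δ x < r}.indicator f x ∂μH[n] = 0 := by
          refine (setLIntegral_congr_fun (g := fun _ => 0)
            (hΩ.inter (hδ (measurableSet_singleton β))) fun x hx => ?_).trans lintegral_zero
          refine indicator_of_notMem (fun hxr => hβ ⟨?_, ?_⟩) _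
          · exact hx.2 ▸ hpos x hx.1
          · exact hx.2 ▸ hxr
        rw [this, mul_zero]
        exact zero_le
    calc ∫⁻ x in Ω ∩ {x | δ x < r}, f x
        = ∫⁻ x in Ω ∩ {x | δ x < r}, {x | δ x < r}.indicator f x :=
          setLIntegral_congr_fun (hΩ.inter hS) fun x hx => (indicator_of_mem hx.2 f).symm
      _ ≤ ∫⁻ x in Ω ∩ s, {x | δ x < r}.indicator f x :=
          lintegral_mono_set (inter_subset_inter_right _ fun x hx => hr x hx)
      _ ≤ M * ∫⁻ β, h β := h3
      _ ≤ M * ∫⁻ β, (Ioo 0 r).indicator (fun β => M * w β) β := by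
          gcongr with β
          exact hle β
      _ = M * M * ∫⁻ β in Ioo 0 r, w β := by
          rw [lintegral_indicator measurableSet_Ioo, lintegral_const_mul' _ _ hM, mul_assoc]
      _ ≤ (M * M + M) * ∫⁻ β in Ioo 0 r, w β := by
          gcongr
          exact le_self_add
  · obtain ⟨h, hh, -, h2, -, h4⟩ := hMf f hf
    calc c * ENNReal.ofReal r = ∫⁻ _ in Ioo 0 r, c := by simp
      _ ≤ ∫⁻ β in Ioo 0 r, M * h β := by
          refine setLIntegral_mono (hh.const_mul _) fun β hβ => (hc β hβ).trans ?_
          refine le_trans (lintegral_mono_set ?_) (h2 β)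
          exact fun x hx => ⟨⟨hx.1, hr x (hx.2.trans_lt hβ.2)⟩, hx.2⟩
      _ ≤ ∫⁻ β, M * h β := setLIntegral_le_lintegral _ _
      _ = M * ∫⁻ β, h β := lintegral_const_mul _ hh
      _ ≤ M * (M * ∫⁻ x in Ω, f x) := by gcongr
      _ ≤ (M * M + M) * ∫⁻ x in Ω, f x := by
          rw [← mul_assoc]
          gcongr
          exact le_self_add
  · refine le_trans (lintegral_mono_set ?_) ((hMy y β).trans le_add_self)
    exact fun x hx => ⟨⟨hx.1, hr x (hx.2.trans_lt hβ.2)⟩, hx.2⟩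

/-- The points of `Ω` at distance at least `r > 0` from the boundary form a compact set. -/
theorem isCompact_le_infDist_frontier {X : Type*} [MetricSpace X] [ProperSpace X] {Ω : Set X}
    (ho : IsOpen Ω) (hb : Bornology.IsBounded Ω) {r : ℝ} (hr : 0 < r) :
    IsCompact {x ∈ Ω | r ≤ infDist x (frontier Ω)} := by
  have : {x ∈ Ω | r ≤ infDist x (frontier Ω)} =
      closure Ω ∩ {x | r ≤ infDist x (frontier Ω)} := by
    ext x
    refine ⟨fun h => ⟨subset_closure h.1, h.2⟩, fun h => ⟨?_, h.2⟩⟩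
    by_contra hx
    have hxf : x ∈ frontier Ω := by
      rw [ho.frontier_eq]
      exact ⟨h.1, hx⟩
    have h2 : r ≤ infDist x (frontier Ω) := h.2
    rw [infDist_zero_of_mem hxf] at h2
    exact absurd h2 (not_le.2 hr)
  rw [this]
  exact hb.isCompact_closure.inter_right
    (isClosed_le continuous_const (continuous_infDist_pt _))

/-- A continuous positive kernel whose integrals over the level sets of the distance to the
boundary are bounded above and below has integrals over `Ω` bounded above and below. -/
theorem HasC2Boundary.exists_setLIntegral_kernel {n : ℕ}
    {Ω : Set (EuclideanSpace ℝ (Fin (n + 1)))} (ho : IsOpen Ω) (hb : Bornology.IsBounded Ω)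
    (hne : (frontier Ω).Nonempty) (h2 : HasC2Boundary Ω) (hn : 1 ≤ n)
    {k : EuclideanSpace ℝ (Fin (n + 1)) → EuclideanSpace ℝ (Fin (n + 1)) → ℝ}
    (hk : ContinuousOn (Function.uncurry k) (Ω ×ˢ frontier Ω)) {c C : ℝ≥0∞} (hc : c ≠ 0)
    (hC : C ≠ ⊤) {ε : ℝ} (hε : 0 < ε)
    (hcC : ∀ y ∈ frontier Ω, ∀ β ∈ Ioo 0 ε,
      c ≤ ∫⁻ x in Ω ∩ {x | infDist x (frontier Ω) = β}, ENNReal.ofReal (k x y) ∂μH[n] ∧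
      ∫⁻ x in Ω ∩ {x | infDist x (frontier Ω) = β}, ENNReal.ofReal (k x y) ∂μH[n] ≤ C) :
    ∃ a A : ℝ≥0∞, a ≠ 0 ∧ A ≠ ⊤ ∧ ∀ y ∈ frontier Ω,
      a ≤ ∫⁻ x in Ω, ENNReal.ofReal (k x y) ∧ ∫⁻ x in Ω, ENNReal.ofReal (k x y) ≤ A := by
  have hfc : IsCompact (frontier Ω) :=
    hb.isCompact_closure.of_isClosed_subset isClosed_frontier frontier_subset_closure
  have hδm : Measurable fun x => infDist x (frontier Ω) := measurable_infDist
  have hn' : (1 : ℝ) ≤ n := by exact_mod_cast hn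
  obtain ⟨r, hr, s, hs, hrs⟩ := h2.exists_hasSlices ho hfc hne hn (κ := 1 / 2) (by norm_num)
    (by linarith)
  obtain ⟨M, hM, hMr⟩ := hs.setLIntegral_le hδm ho.measurableSet
    fun x hx => infDist_frontier_pos ho hne hx
  set ρ := min r ε with hρ
  have hρ0 : 0 < ρ := lt_min hr hε
  obtain ⟨hup, hlo, -⟩ := hMr ρ fun x hx => hrs x (hx.trans_le (min_le_left _ _))
  obtain ⟨B, hB⟩ := ((isCompact_le_infDist_frontier ho hb hρ0).prod hfc).bddAbove_image
    (hk.mono (prod_mono_left fun x hx => hx.1))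
  have hfm : ∀ y ∈ frontier Ω, Measurable (Ω.indicator fun x => ENNReal.ofReal (k x y)) := by
    intro y hy
    exact (continuous_ofReal.comp_continuousOn (hk.comp (f := fun x => (x, y)) (by fun_prop)
      fun x hx => mk_mem_prod hx hy)).measurable_indicator ho.measurableSet
  have hcong : ∀ S, MeasurableSet S → ∀ y, ∀ μ : Measure (EuclideanSpace ℝ (Fin (n + 1))),
      ∫⁻ x in Ω ∩ S, Ω.indicator (fun x => ENNReal.ofReal (k x y)) x ∂μ =
        ∫⁻ x in Ω ∩ S, ENNReal.ofReal (k x y) ∂μ := fun S hS y μ =>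
    setLIntegral_congr_fun (ho.measurableSet.inter hS) fun x hx => indicator_of_mem hx.1 _
  have hlev : ∀ β, MeasurableSet {x | infDist x (frontier Ω) = β} := fun β =>
    hδm (measurableSet_singleton β)
  refine ⟨c * ENNReal.ofReal ρ / M, M * (C * ENNReal.ofReal ρ) + ENNReal.ofReal B * volume Ω, ?_,
    ?_, fun y hy => ⟨?_, ?_⟩⟩
  · exact ENNReal.div_ne_zero.2 ⟨mul_ne_zero hc (by simpa using hρ0), hM⟩
  · have := hb.measure_lt_top (μ := volume).ne
    finiteness
  · refine ENNReal.div_le_of_le_mul' ?_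
    have := hlo _ c (hfm y hy) fun β hβ => ?_
    · have h3 := hcong univ MeasurableSet.univ y volume
      simp only [inter_univ] at h3
      rwa [h3] at this
    · rw [hcong _ (hlev β)]
      exact (hcC y hy β ⟨hβ.1, hβ.2.trans_le (min_le_right _ _)⟩).1
  · have hsub : Ω ⊆ Ω ∩ {x | infDist x (frontier Ω) < ρ} ∪ {x ∈ Ω | ρ ≤ infDist x (frontier Ω)} :=
      fun x hx => by
        rcases lt_or_ge (infDist x (frontier Ω)) ρ with h | h
        · exact Or.inl ⟨hx, h⟩
        · exact Or.inr ⟨hx, h⟩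
    refine (lintegral_mono_set hsub).trans ((lintegral_union_le _ _ _).trans (add_le_add ?_ ?_))
    · have := hup _ (fun _ => C) (hfm y hy) fun β hβ => ?_
      · rw [hcong _ (measurableSet_lt hδm measurable_const)] at this
        simpa using this
      · rw [hcong _ (hlev β)]
        exact (hcC y hy β ⟨hβ.1, hβ.2.trans_le (min_le_right _ _)⟩).2
    · calc ∫⁻ x in {x ∈ Ω | ρ ≤ infDist x (frontier Ω)}, ENNReal.ofReal (k x y)
          ≤ ∫⁻ x in {x ∈ Ω | ρ ≤ infDist x (frontier Ω)}, ENNReal.ofReal B := by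
            refine setLIntegral_mono measurable_const fun x hx => ofReal_le_ofReal ?_
            exact hB (mem_image_of_mem (Function.uncurry k) (mk_mem_prod hx hy))
        _ ≤ ENNReal.ofReal B * volume Ω := by
            rw [setLIntegral_const]
            gcongr
            exact fun x hx => hx.1

theorem ofReal_dist_rpow {X : Type*} [MetricSpace X] {x y : X} (hxy : x ≠ y) (s : ℝ) :
    ENNReal.ofReal (dist x y ^ s) = edist x y ^ s := by
  rw [edist_dist, ENNReal.ofReal_rpow_of_pos (dist_pos.2 hxy)]

/-- Consequence of a Green function bound near the diagonal. -/
theorem div_mul_le_of_lt_mul {P g Q c a d t m : ℝ} (ht : 0 < t) (hd : 0 < d) (hda : d < a * t)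
    (hc : 0 ≤ c) (hQ : 0 ≤ Q) (h : P * g ≤ c * d ^ (1 - m) * Q) :
    P / t * g ≤ c * a * d ^ (-m) * Q := by
  have h1 : d ^ (1 - m) = d * d ^ (-m) := by
    rw [sub_eq_add_neg, Real.rpow_add hd, Real.rpow_one]
  have h2 : P / t * g = P * g / t := by ring
  rw [h2, div_le_iff₀ ht]
  have h3 : 0 ≤ d ^ (-m) := Real.rpow_nonneg hd.le _
  calc P * g ≤ c * d ^ (1 - m) * Q := h
    _ = d * (c * d ^ (-m) * Q) := by rw [h1]; ring
    _ ≤ a * t * (c * d ^ (-m) * Q) := by gcongr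
    _ = c * a * d ^ (-m) * Q * t := by ring

/-- Consequence of a Green function bound away from the diagonal. -/
theorem div_mul_le_of_le {P g Q c d t m α αs : ℝ} (ht : 0 < t) (hdt : t ≤ d)
    (hc : 0 ≤ c) (hQ : 0 ≤ Q) (hα : 0 < α - 1 / 2) (hαs : α - 1 / 2 < αs)
    (h : P * g ≤ c * t ^ (2 * αs) * d ^ (1 - m - 2 * α) * Q) :
    P / t * g ≤ c * (t ^ ((1 / 2 - (α - αs)) - 1) * d ^ (-(m - (1 / 2 - (α - αs))))) * Q := by
  have hd : 0 < d := ht.trans_le hdt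
  have h2 : P / t * g = P * g / t := by ring
  rw [h2, div_le_iff₀ ht]
  have h3 : t ^ (2 * αs) = t ^ ((1 / 2 - (α - αs)) - 1) * t * t ^ (αs + α - 1 / 2) := by
    nth_rewrite 3 [← Real.rpow_one t]
    rw [← Real.rpow_add ht, ← Real.rpow_add ht]
    congr 1
    ring
  have h4 : d ^ (-(m - (1 / 2 - (α - αs)))) = d ^ (αs + α - 1 / 2) * d ^ (1 - m - 2 * α) := by
    rw [← Real.rpow_add hd]
    congr 1
    ring
  have h5 : t ^ (αs + α - 1 / 2) ≤ d ^ (αs + α - 1 / 2) :=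
    Real.rpow_le_rpow ht.le hdt (by linarith)
  calc P * g ≤ c * t ^ (2 * αs) * d ^ (1 - m - 2 * α) * Q := h
    _ = c * (t ^ ((1 / 2 - (α - αs)) - 1) * t * t ^ (αs + α - 1 / 2)) * d ^ (1 - m - 2 * α) * Q := by
      rw [← h3]
    _ ≤ c * (t ^ ((1 / 2 - (α - αs)) - 1) * t * d ^ (αs + α - 1 / 2)) * d ^ (1 - m - 2 * α) * Q := by
      gcongr
    _ = _ := by
      rw [h4]
      ring

/-- Bound for the Green function with one argument away from the boundary. -/
theorem exists_ofReal_green_le_of_le_infDist {n : ℕ}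
    {Ω : Set (EuclideanSpace ℝ (Fin (n + 1)))} (ho : IsOpen Ω) (hb : Bornology.IsBounded Ω)
    {Φ : EuclideanSpace ℝ (Fin (n + 1)) → ℝ} (hΦc : ContinuousOn Φ Ω) (hΦpos : ∀ x ∈ Ω, 0 < Φ x)
    {G : EuclideanSpace ℝ (Fin (n + 1)) → EuclideanSpace ℝ (Fin (n + 1)) → ℝ}
    (hG3 : ∀ b : ℝ, 0 < b → ∃ Cb : ℝ, 1 ≤ Cb ∧ ∀ x ∈ Ω, ∀ y ∈ Ω, 0 < dist x y →
      dist x y ≤ b⁻¹ * min (infDist x (frontier Ω)) (infDist y (frontier Ω)) →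
      G x y ≤ Cb * dist x y ^ (1 - (n : ℝ)))
    (hGsym : ∀ x ∈ Ω, ∀ y ∈ Ω, G x y = G y x)
    (hG4 : ∀ r : ℝ, 0 < r → ∃ Cr : ℝ, 0 < Cr ∧ ∀ x ∈ Ω, ∀ y ∈ Ω,
      r ≤ infDist y (frontier Ω) → infDist x (frontier Ω) < r / 2 → G x y ≤ Cr * Φ x)
    {r : ℝ} (hr : 0 < r) :
    ∃ B : ℝ≥0∞, B ≠ ⊤ ∧ ∀ x ∈ Ω, ∀ y ∈ Ω, x ≠ y → r ≤ infDist x (frontier Ω) →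
      ENNReal.ofReal (Φ x / infDist x (frontier Ω) * G x y) ≤
        B * (1 + edist x y ^ (-(n : ℝ))) * ENNReal.ofReal (Φ y) := by
  obtain ⟨D, hD⟩ := isBounded_iff.1 hb
  obtain ⟨A, hA⟩ := (isCompact_le_infDist_frontier ho hb hr).bddAbove_image
    (f := fun x => Φ x / infDist x (frontier Ω))
    ((hΦc.mono fun x hx => hx.1).div (continuous_infDist_pt _).continuousOn
      fun x hx => (hr.trans_le hx.2).ne')
  obtain ⟨m, hm⟩ := (isCompact_le_infDist_frontier ho hb (half_pos hr)).bddAbove_image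
    (f := fun x => (Φ x)⁻¹)
    ((hΦc.mono fun x hx => hx.1).inv₀ fun x hx => (hΦpos x hx.1).ne')
  obtain ⟨Cr, hCr, hG4⟩ := hG4 r hr
  have hb0 : 0 < r / (2 * (|D| + 1)) := by positivity
  obtain ⟨Cb, hCb, hG3⟩ := hG3 _ hb0
  set L := |A| * (Cr + Cb * |D| * |m|) with hL
  refine ⟨ENNReal.ofReal L, ofReal_ne_top, fun x hx y hy hxy hxr => ?_⟩
  have hd : 0 < dist x y := dist_pos.2 hxy
  have hΦy := hΦpos y hy
  have hδ : 0 < infDist x (frontier Ω) := hr.trans_le hxr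
  have hpow : 0 ≤ dist x y ^ (-(n : ℝ)) := Real.rpow_nonneg hd.le _
  have hxA : Φ x / infDist x (frontier Ω) ≤ |A| :=
    (hA (mem_image_of_mem (fun x => Φ x / infDist x (frontier Ω)) ⟨hx, hxr⟩)).trans (le_abs_self A)
  have hx0 : 0 ≤ Φ x / infDist x (frontier Ω) := div_nonneg (hΦpos x hx).le hδ.le
  have key : Φ x / infDist x (frontier Ω) * G x y ≤ L * (1 + dist x y ^ (-(n : ℝ))) * Φ y := by
    have hGle : G x y ≤ (Cr + Cb * |D| * |m|) * (1 + dist x y ^ (-(n : ℝ))) * Φ y := by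
      rcases lt_or_ge (infDist y (frontier Ω)) (r / 2) with hyr | hyr
      · rw [hGsym x hx y hy]
        refine (hG4 y hy x hx hxr hyr).trans ?_
        gcongr
        have : 0 ≤ Cb * |D| * |m| := by positivity
        nlinarith
      · have hym : 1 ≤ |m| * Φ y := by
          have := (hm (mem_image_of_mem (fun x => (Φ x)⁻¹) ⟨hy, hyr⟩)).trans (le_abs_self m)
          rwa [inv_le_iff_one_le_mul₀ hΦy] at this
        have hdD : dist x y ≤ |D| := (hD hx hy).trans (le_abs_self D)
        have h1 := hG3 x hx y hy hd (by
          have hmin : r / 2 ≤ min (infDist x (frontier Ω)) (infDist y (frontier Ω)) :=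
            le_min (by linarith) hyr
          have : (r / (2 * (|D| + 1)))⁻¹ * (r / 2) = |D| + 1 := by
            field_simp
          calc dist x y ≤ |D| + 1 := by linarith
            _ = (r / (2 * (|D| + 1)))⁻¹ * (r / 2) := this.symm
            _ ≤ _ := by gcongr)
        rw [sub_eq_add_neg, Real.rpow_add hd, Real.rpow_one] at h1
        calc G x y ≤ Cb * (dist x y * dist x y ^ (-(n : ℝ))) := h1
          _ ≤ Cb * (|D| * dist x y ^ (-(n : ℝ))) * (|m| * Φ y) := by
            refine le_trans ?_ (le_mul_of_one_le_right (by positivity) hym)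
            gcongr
          _ = (Cb * |D| * |m|) * dist x y ^ (-(n : ℝ)) * Φ y := by ring
          _ ≤ (Cr + Cb * |D| * |m|) * (1 + dist x y ^ (-(n : ℝ))) * Φ y := by
            gcongr <;> linarith
    calc Φ x / infDist x (frontier Ω) * G x y
        ≤ Φ x / infDist x (frontier Ω) *
          ((Cr + Cb * |D| * |m|) * (1 + dist x y ^ (-(n : ℝ))) * Φ y) := by gcongr
      _ ≤ |A| * ((Cr + Cb * |D| * |m|) * (1 + dist x y ^ (-(n : ℝ))) * Φ y) := by gcongr
      _ = L * (1 + dist x y ^ (-(n : ℝ))) * Φ y := by rw [hL]; ring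
  have hL0 : 0 ≤ L := by positivity
  calc ENNReal.ofReal (Φ x / infDist x (frontier Ω) * G x y)
      ≤ ENNReal.ofReal (L * (1 + dist x y ^ (-(n : ℝ))) * Φ y) := ofReal_le_ofReal key
    _ = ENNReal.ofReal L * (1 + edist x y ^ (-(n : ℝ))) * ENNReal.ofReal (Φ y) := by
      rw [ofReal_mul (by positivity), ofReal_mul hL0, ofReal_add zero_le_one hpow, ofReal_one,
        ofReal_dist_rpow hxy]

/-- Bound for the Green function with one argument near the boundary. -/
theorem ofReal_green_le_of_infDist_lt {n : ℕ}
    {Ω : Set (EuclideanSpace ℝ (Fin (n + 1)))} (ho : IsOpen Ω) (hne : (frontier Ω).Nonempty)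
    {α αs : ℝ} (hα : 0 < α - 1 / 2) (hαs : α - 1 / 2 < αs)
    {Φ : EuclideanSpace ℝ (Fin (n + 1)) → ℝ} (hΦpos : ∀ x ∈ Ω, 0 < Φ x)
    {G : EuclideanSpace ℝ (Fin (n + 1)) → EuclideanSpace ℝ (Fin (n + 1)) → ℝ}
    {a c₀ β₁ : ℝ} (ha : 2 ≤ a) (hc₀ : 1 ≤ c₀)
    (hG1 : ∀ x ∈ Ω, infDist x (frontier Ω) < β₁ → ∀ y ∈ Ω, 0 < dist x y →
      dist x y < a * infDist x (frontier Ω) →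
        Φ x * G x y ≤ c₀ * dist x y ^ (1 - (n : ℝ)) * Φ y)
    (hG2 : ∀ x ∈ Ω, infDist x (frontier Ω) < β₁ → ∀ y ∈ Ω,
      a * infDist x (frontier Ω) ≤ dist x y →
        Φ x * G x y ≤ c₀ * infDist x (frontier Ω) ^ (2 * αs) *
          dist x y ^ (1 - (n : ℝ) - 2 * α) * Φ y)
    {x y : EuclideanSpace ℝ (Fin (n + 1))} (hx : x ∈ Ω) (hy : y ∈ Ω) (hxy : x ≠ y)
    (hxβ : infDist x (frontier Ω) < β₁) :
    ENNReal.ofReal (Φ x / infDist x (frontier Ω) * G x y) ≤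
      (ENNReal.ofReal (c₀ * a) * edist x y ^ (-(n : ℝ)) +
        ENNReal.ofReal c₀ * (ENNReal.ofReal (infDist x (frontier Ω) ^ ((1 / 2 - (α - αs)) - 1)) *
          edist x y ^ (-((n : ℝ) - (1 / 2 - (α - αs)))))) * ENNReal.ofReal (Φ y) := by
  have hd : 0 < dist x y := dist_pos.2 hxy
  have hδ := infDist_frontier_pos ho hne hx
  have hΦy := hΦpos y hy
  rw [add_mul]
  rcases lt_or_ge (dist x y) (a * infDist x (frontier Ω)) with h | h
  · refine le_trans (ofReal_le_ofReal (div_mul_le_of_lt_mul hδ hd h (by linarith) hΦy.le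
      (hG1 x hx hxβ y hy hd h))) (le_trans (le_of_eq ?_) le_self_add)
    rw [ofReal_mul (by positivity), ofReal_mul (by positivity), ofReal_dist_rpow hxy]
  · refine le_trans (ofReal_le_ofReal (div_mul_le_of_le hδ (by nlinarith) (by linarith) hΦy.le
      hα hαs (hG2 x hx hxβ y hy h))) (le_trans (le_of_eq ?_) le_add_self)
    rw [ofReal_mul (by positivity), ofReal_mul (by positivity), ofReal_mul (by positivity),
      ofReal_dist_rpow hxy]

/-- The weighted integral of the Green function is bounded by a multiple of `Φ`. -/
theorem HasC2Boundary.exists_setLIntegral_green_le {n : ℕ}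
    {Ω : Set (EuclideanSpace ℝ (Fin (n + 1)))} (ho : IsOpen Ω) (hb : Bornology.IsBounded Ω)
    (hne : (frontier Ω).Nonempty) (h2 : HasC2Boundary Ω) (hn : 1 ≤ n)
    {α αs : ℝ} (hα : 0 < α - 1 / 2) (hαs : α - 1 / 2 < αs) (hαs' : αs ≤ α)
    {Φ : EuclideanSpace ℝ (Fin (n + 1)) → ℝ} (hΦc : ContinuousOn Φ Ω) (hΦpos : ∀ x ∈ Ω, 0 < Φ x)
    {G : EuclideanSpace ℝ (Fin (n + 1)) → EuclideanSpace ℝ (Fin (n + 1)) → ℝ}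
    {a c₀ β₁ : ℝ} (ha : 2 ≤ a) (hc₀ : 1 ≤ c₀) (hβ₁ : 0 < β₁)
    (hG1 : ∀ x ∈ Ω, infDist x (frontier Ω) < β₁ → ∀ y ∈ Ω, 0 < dist x y →
      dist x y < a * infDist x (frontier Ω) →
        Φ x * G x y ≤ c₀ * dist x y ^ (1 - (n : ℝ)) * Φ y)
    (hG2 : ∀ x ∈ Ω, infDist x (frontier Ω) < β₁ → ∀ y ∈ Ω,
      a * infDist x (frontier Ω) ≤ dist x y →
        Φ x * G x y ≤ c₀ * infDist x (frontier Ω) ^ (2 * αs) *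
          dist x y ^ (1 - (n : ℝ) - 2 * α) * Φ y)
    (hG3 : ∀ b : ℝ, 0 < b → ∃ Cb : ℝ, 1 ≤ Cb ∧ ∀ x ∈ Ω, ∀ y ∈ Ω, 0 < dist x y →
      dist x y ≤ b⁻¹ * min (infDist x (frontier Ω)) (infDist y (frontier Ω)) →
      G x y ≤ Cb * dist x y ^ (1 - (n : ℝ)))
    (hGsym : ∀ x ∈ Ω, ∀ y ∈ Ω, G x y = G y x)
    (hG4 : ∀ r : ℝ, 0 < r → ∃ Cr : ℝ, 0 < Cr ∧ ∀ x ∈ Ω, ∀ y ∈ Ω,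
      r ≤ infDist y (frontier Ω) → infDist x (frontier Ω) < r / 2 → G x y ≤ Cr * Φ x) :
    ∃ C : ℝ≥0∞, C ≠ ⊤ ∧ ∀ y ∈ Ω,
      ∫⁻ x in Ω, ENNReal.ofReal (Φ x / infDist x (frontier Ω) * G x y) ≤
        C * ENNReal.ofReal (Φ y) := by
  have hfc : IsCompact (frontier Ω) :=
    hb.isCompact_closure.of_isClosed_subset isClosed_frontier frontier_subset_closure
  have hδm : Measurable fun x => infDist x (frontier Ω) := measurable_infDist
  have hn' : (1 : ℝ) ≤ n := by exact_mod_cast hn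
  set η := 1 / 2 - (α - αs) with hη
  have hη0 : 0 < η := by linarith
  obtain ⟨r, hr, s, hs, hrs⟩ := h2.exists_hasSlices ho hfc hne hn (κ := n - η) (by linarith)
    (by linarith)
  obtain ⟨M, hM, hMr⟩ := hs.setLIntegral_le hδm ho.measurableSet
    fun x hx => infDist_frontier_pos ho hne hx
  set ρ := min r β₁ with hρ
  have hρ0 : 0 < ρ := lt_min hr hβ₁
  obtain ⟨hup, -, hsing⟩ := hMr ρ fun x hx => hrs x (hx.trans_le (min_le_left _ _))
  obtain ⟨B, hB, hBG⟩ := exists_ofReal_green_le_of_le_infDist ho hb hΦc hΦpos hG3 hGsym hG4 hρ0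
  obtain ⟨A, hA, hAy⟩ := exists_setLIntegral_edist_rpow_le
    (volume : Measure (EuclideanSpace ℝ (Fin (n + 1)))) (s := n) (by simp) (by linarith)
    (by simp) hb
  set J := ∫⁻ β in Ioo 0 ρ, ENNReal.ofReal (β ^ (η - 1)) with hJ
  have hJtop : J ≠ ⊤ :=
    ((intervalIntegral.integrableOn_Ioo_rpow_iff hρ0).2 (by linarith)).lintegral_lt_top.ne
  set Q := ENNReal.ofReal (c₀ * a) * A + ENNReal.ofReal c₀ * (M * (J * M)) with hQ
  have hvol : volume Ω ≠ ⊤ := hb.measure_lt_top.ne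
  refine ⟨Q + B * (volume Ω + A), by finiteness, fun y hy => ?_⟩
  have hyae : ∀ S : Set (EuclideanSpace ℝ (Fin (n + 1))), ∀ᵐ x ∂(volume.restrict S), x ≠ y :=
    fun S => ae_restrict_of_ae (measure_eq_zero_iff_ae_notMem.1 (measure_singleton y))
  have hpm : ∀ κ : ℝ, Measurable fun x : EuclideanSpace ℝ (Fin (n + 1)) => edist x y ^ κ :=
    fun κ => measurable_edist_left.pow_const _
  have hsub : Ω ⊆ Ω ∩ {x | infDist x (frontier Ω) < ρ} ∪ {x ∈ Ω | ρ ≤ infDist x (frontier Ω)} :=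
    fun x hx => by
      rcases lt_or_ge (infDist x (frontier Ω)) ρ with h | h
      · exact Or.inl ⟨hx, h⟩
      · exact Or.inr ⟨hx, h⟩
  rw [add_mul]
  refine (lintegral_mono_set hsub).trans ((lintegral_union_le _ _ _).trans (add_le_add ?_ ?_))
  · have hSm : MeasurableSet (Ω ∩ {x | infDist x (frontier Ω) < ρ}) :=
      ho.measurableSet.inter (measurableSet_lt hδm measurable_const)
    have hfm : Measurable fun x : EuclideanSpace ℝ (Fin (n + 1)) =>
        ENNReal.ofReal (infDist x (frontier Ω) ^ (η - 1)) * edist x y ^ (-((n : ℝ) - η)) :=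
      (hδm.pow_const _).ennreal_ofReal.mul (hpm _)
    have hfar : ∫⁻ x in Ω ∩ {x | infDist x (frontier Ω) < ρ},
        ENNReal.ofReal (infDist x (frontier Ω) ^ (η - 1)) * edist x y ^ (-((n : ℝ) - η)) ≤
          M * (J * M) := by
      refine (hup _ (fun β => ENNReal.ofReal (β ^ (η - 1)) * M) hfm fun β hβ => ?_).trans_eq ?_
      · rw [setLIntegral_congr_fun (g := fun x => ENNReal.ofReal (β ^ (η - 1)) *
          edist x y ^ (-((n : ℝ) - η))) (ho.measurableSet.inter (measurableSet_eq_fun hδm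
            measurable_const)) fun x hx => by rw [hx.2], lintegral_const_mul _ (hpm _)]
        gcongr
        exact hsing y β hβ
      · rw [lintegral_mul_const' _ _ hM]
    have hnear : ∫⁻ x in Ω ∩ {x | infDist x (frontier Ω) < ρ}, edist x y ^ (-(n : ℝ)) ≤ A :=
      (lintegral_mono_set inter_subset_left).trans (hAy y)
    calc ∫⁻ x in Ω ∩ {x | infDist x (frontier Ω) < ρ},
          ENNReal.ofReal (Φ x / infDist x (frontier Ω) * G x y)
        ≤ ∫⁻ x in Ω ∩ {x | infDist x (frontier Ω) < ρ},
          (ENNReal.ofReal (c₀ * a) * edist x y ^ (-(n : ℝ)) +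
            ENNReal.ofReal c₀ * (ENNReal.ofReal (infDist x (frontier Ω) ^ (η - 1)) *
              edist x y ^ (-((n : ℝ) - η)))) * ENNReal.ofReal (Φ y) := by
          refine lintegral_mono_ae ?_
          filter_upwards [ae_restrict_mem hSm, hyae _] with x hx hxy
          exact ofReal_green_le_of_infDist_lt ho hne hα hαs hΦpos ha hc₀ hG1 hG2 hx.1 hy hxy
            (hx.2.trans_le (min_le_right _ _))
      _ ≤ Q * ENNReal.ofReal (Φ y) := by
          rw [lintegral_mul_const' _ _ ofReal_ne_top,
            lintegral_add_left ((hpm _).const_mul _), lintegral_const_mul _ (hpm _),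
            lintegral_const_mul _ hfm, hQ]
          gcongr
  · calc ∫⁻ x in {x ∈ Ω | ρ ≤ infDist x (frontier Ω)},
          ENNReal.ofReal (Φ x / infDist x (frontier Ω) * G x y)
        ≤ ∫⁻ x in {x ∈ Ω | ρ ≤ infDist x (frontier Ω)},
          B * (1 + edist x y ^ (-(n : ℝ))) * ENNReal.ofReal (Φ y) := by
          refine lintegral_mono_ae ?_
          filter_upwards [ae_restrict_mem (ho.measurableSet.inter (measurableSet_le measurable_const
            hδm)), hyae _] with x hx hxy
          exact hBG x hx.1 y hy hxy hx.2
      _ ≤ ∫⁻ x in Ω, B * (1 + edist x y ^ (-(n : ℝ))) * ENNReal.ofReal (Φ y) :=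
          lintegral_mono_set fun x hx => hx.1
      _ ≤ B * (volume Ω + A) * ENNReal.ofReal (Φ y) := by
          rw [lintegral_mul_const' _ _ ofReal_ne_top, lintegral_const_mul' _ _ hB,
            lintegral_add_left measurable_const, setLIntegral_one]
          gcongr
          exact hAy y

/-- A pointwise lower bound on a ball gives a lower bound for the integral. -/
theorem mul_volume_ball_le_setLIntegral {n : ℕ} {Ω : Set (EuclideanSpace ℝ (Fin (n + 1)))}
    {x₀ y : EuclideanSpace ℝ (Fin (n + 1))} {r t : ℝ} (hΩ : ball x₀ r ⊆ Ω)
    {f : EuclideanSpace ℝ (Fin (n + 1)) → ℝ} (hf : ∀ x ∈ ball x₀ r, x ≠ y → t ≤ f x) :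
    ENNReal.ofReal t * volume (ball x₀ r) ≤ ∫⁻ x in Ω, ENNReal.ofReal (f x) := by
  rw [← setLIntegral_const]
  refine le_trans (lintegral_mono_ae ?_) (lintegral_mono_set hΩ)
  filter_upwards [ae_restrict_mem measurableSet_ball,
    ae_restrict_of_ae (measure_eq_zero_iff_ae_notMem.1 (measure_singleton y))] with x hx hxy
  exact ofReal_le_ofReal (hf x hx hxy)

/-- The weighted integral of the Green function is bounded below by a multiple of `Φ`. -/
theorem HasC2Boundary.exists_le_setLIntegral_green {n : ℕ}
    {Ω : Set (EuclideanSpace ℝ (Fin (n + 1)))} (ho : IsOpen Ω) (hb : Bornology.IsBounded Ω)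
    (hne : (frontier Ω).Nonempty) (h2 : HasC2Boundary Ω) (hn : 1 ≤ n)
    {Φ : EuclideanSpace ℝ (Fin (n + 1)) → ℝ} (hΦc : ContinuousOn Φ Ω) (hΦpos : ∀ x ∈ Ω, 0 < Φ x)
    {G : EuclideanSpace ℝ (Fin (n + 1)) → EuclideanSpace ℝ (Fin (n + 1)) → ℝ}
    {a c₀ β₁ : ℝ} (ha : 2 ≤ a) (hc₀ : 1 ≤ c₀) (hβ₁ : 0 < β₁)
    (hG1 : ∀ x ∈ Ω, infDist x (frontier Ω) < β₁ → ∀ y ∈ Ω, 0 < dist x y →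
      dist x y < a * infDist x (frontier Ω) →
        c₀⁻¹ * dist x y ^ (1 - (n : ℝ)) * Φ y ≤ Φ x * G x y)
    {Cb : ℝ} (hCb : 1 ≤ Cb) (hG3 : ∀ x ∈ Ω, ∀ y ∈ Ω, 0 < dist x y →
      dist x y ≤ min (infDist x (frontier Ω)) (infDist y (frontier Ω)) →
      Cb⁻¹ * dist x y ^ (1 - (n : ℝ)) ≤ G x y) :
    ∃ c : ℝ≥0∞, c ≠ 0 ∧ ∀ y ∈ Ω, c * ENNReal.ofReal (Φ y) ≤
      ∫⁻ x in Ω, ENNReal.ofReal (Φ x / infDist x (frontier Ω) * G x y) := by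
  have hδc : Continuous fun x => infDist x (frontier Ω) := continuous_infDist_pt _
  have hn' : 1 - (n : ℝ) ≤ 0 := by
    have : (1 : ℝ) ≤ n := by exact_mod_cast hn
    linarith
  suffices H : ∃ c : ℝ≥0∞, c ≠ 0 ∧ ∀ y ∈ closure Ω, y ∈ Ω → c * ENNReal.ofReal (Φ y) ≤
      ∫⁻ x in Ω, ENNReal.ofReal (Φ x / infDist x (frontier Ω) * G x y) by
    obtain ⟨c, hc, hcy⟩ := H
    exact ⟨c, hc, fun y hy => hcy y (subset_closure hy) hy⟩
  refine hb.isCompact_closure.induction_on (p := fun t => ∃ c : ℝ≥0∞, c ≠ 0 ∧ ∀ y ∈ t, y ∈ Ω →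
    c * ENNReal.ofReal (Φ y) ≤
      ∫⁻ x in Ω, ENNReal.ofReal (Φ x / infDist x (frontier Ω) * G x y)) ?_ ?_ ?_ ?_
  · exact ⟨1, one_ne_zero, fun y hy => absurd hy (notMem_empty y)⟩
  · rintro t t' htt' ⟨c, hc, hcy⟩
    exact ⟨c, hc, fun y hy => hcy y (htt' hy)⟩
  · rintro t t' ⟨c, hc, hcy⟩ ⟨c', hc', hcy'⟩
    refine ⟨min c c', (lt_min (pos_iff_ne_zero.2 hc) (pos_iff_ne_zero.2 hc')).ne', ?_⟩
    rintro y (hy | hy) hyΩ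
    · refine le_trans ?_ (hcy y hy hyΩ)
      gcongr
      exact min_le_left _ _
    · refine le_trans ?_ (hcy' y hy hyΩ)
      gcongr
      exact min_le_right _ _
  intro p hp
  by_cases hpΩ : p ∈ Ω
  · have hδp := infDist_frontier_pos ho hne hpΩ
    have hΦp := hΦpos p hpΩ
    have hΦat : ContinuousAt Φ p := hΦc.continuousAt (ho.mem_nhds hpΩ)
    set δp := infDist p (frontier Ω) with hδpd
    have hev : ∀ᶠ x in nhds p, x ∈ Ω ∧ dist x p < δp / 8 ∧ Φ p / 2 < Φ x ∧ Φ x < 2 * Φ p := by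
      filter_upwards [ho.mem_nhds hpΩ, ball_mem_nhds p (by positivity : 0 < δp / 8),
        hΦat.eventually_const_lt (by linarith : Φ p / 2 < Φ p),
        hΦat.eventually_lt_const (by linarith : Φ p < 2 * Φ p)] with x h1 h2 h3 h4
      exact ⟨h1, h2, h3, h4⟩
    obtain ⟨r, hr, hrp⟩ := eventually_nhds_iff_ball.1 hev
    set t := Φ p / 2 / (2 * δp) * (Cb⁻¹ * (2 * δp) ^ (1 - (n : ℝ))) / (2 * Φ p) with ht
    have ht0 : 0 < t := by positivity
    refine ⟨ball p r, mem_nhdsWithin_of_mem_nhds (ball_mem_nhds p hr),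
      ENNReal.ofReal t * volume (ball p r), mul_ne_zero (by simpa using ht0)
        (measure_ball_pos _ _ hr).ne', fun y hy hyΩ => ?_⟩
    rw [mul_right_comm, ← ofReal_mul ht0.le]
    refine mul_volume_ball_le_setLIntegral (y := y) (fun x hx => (hrp x hx).1) fun x hx hxy => ?_
    obtain ⟨hxΩ, hxd, hxΦ, -⟩ := hrp x hx
    obtain ⟨-, hyd, -, hyΦ⟩ := hrp y hy
    have hd : 0 < dist x y := dist_pos.2 hxy
    have hdxy : dist x y ≤ dist x p + dist y p := dist_triangle_right x y p
    have hδx : δp ≤ infDist x (frontier Ω) + dist x p := by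
      rw [dist_comm]
      exact infDist_le_infDist_add_dist
    have hδy : δp ≤ infDist y (frontier Ω) + dist y p := by
      rw [dist_comm]
      exact infDist_le_infDist_add_dist
    have hδx' : infDist x (frontier Ω) ≤ δp + dist x p := infDist_le_infDist_add_dist
    have hδx0 : 0 < infDist x (frontier Ω) := by linarith
    have hGxy := hG3 x hxΩ y hyΩ hd (le_min (by linarith) (by linarith))
    have hpow : (2 * δp) ^ (1 - (n : ℝ)) ≤ dist x y ^ (1 - (n : ℝ)) :=
      Real.rpow_le_rpow_of_nonpos hd (by linarith) hn'
    have hΦy := hΦpos y hyΩ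
    calc t * Φ y ≤ t * (2 * Φ p) := by gcongr
      _ = Φ p / 2 / (2 * δp) * (Cb⁻¹ * (2 * δp) ^ (1 - (n : ℝ))) := by
        rw [ht]
        field_simp
      _ ≤ Φ x / infDist x (frontier Ω) * (Cb⁻¹ * dist x y ^ (1 - (n : ℝ))) := by
        gcongr
        · exact div_nonneg (hΦpos x hxΩ).le hδx0.le
        · exact (hΦpos x hxΩ).le
        · linarith
      _ ≤ Φ x / infDist x (frontier Ω) * G x y := by
        have := (hΦpos x hxΩ).le
        gcongr
  · have hpf : p ∈ frontier Ω := by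
      rw [ho.frontier_eq]
      exact ⟨hp, hpΩ⟩
    obtain ⟨x₀, hx₀, hx₀β, hx₀p⟩ := h2.exists_dist_lt_two_mul_infDist hpf hβ₁
    have hev : ∀ᶠ q : EuclideanSpace ℝ (Fin (n + 1)) × EuclideanSpace ℝ (Fin (n + 1)) in
        nhds (x₀, p), q.1 ∈ Ω ∧ infDist q.1 (frontier Ω) < β₁ ∧
          dist q.1 q.2 < 2 * infDist q.1 (frontier Ω) := by
      have h1 : Continuous fun q : EuclideanSpace ℝ (Fin (n + 1)) × EuclideanSpace ℝ (Fin (n + 1))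
        => infDist q.1 (frontier Ω) := hδc.comp continuous_fst
      filter_upwards [continuous_fst.continuousAt.eventually (ho.mem_nhds hx₀),
        h1.continuousAt.eventually_lt_const hx₀β,
        continuous_dist.continuousAt.eventually_lt (h1.const_mul 2).continuousAt hx₀p]
        with q hq1 hq2 hq3
      exact ⟨hq1, hq2, hq3⟩
    obtain ⟨r, hr, hrp⟩ := eventually_nhds_iff_ball.1 hev
    have hprod : ∀ x ∈ ball x₀ r, ∀ y ∈ ball p r, (x, y) ∈ ball (x₀, p) r := fun x hx y hy => by
      rw [← ball_prod_same]
      exact ⟨hx, hy⟩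
    set t := c₀⁻¹ * (2 * β₁) ^ (1 - (n : ℝ)) / β₁ with ht
    have ht0 : 0 < t := by positivity
    refine ⟨ball p r, mem_nhdsWithin_of_mem_nhds (ball_mem_nhds p hr),
      ENNReal.ofReal t * volume (ball x₀ r), mul_ne_zero (by simpa using ht0)
        (measure_ball_pos _ _ hr).ne', fun y hy hyΩ => ?_⟩
    rw [mul_right_comm, ← ofReal_mul ht0.le]
    refine mul_volume_ball_le_setLIntegral (y := y)
      (fun x hx => (hrp _ (hprod x hx p (mem_ball_self hr))).1) fun x hx hxy => ?_
    obtain ⟨hxΩ, hxβ, hxy2⟩ := hrp _ (hprod x hx y hy)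
    simp only at hxΩ hxβ hxy2
    have hδ := infDist_frontier_pos ho hne hxΩ
    have hΦy := hΦpos y hyΩ
    have hd : 0 < dist x y := dist_pos.2 hxy
    have hGxy := hG1 x hxΩ hxβ y hyΩ hd (by nlinarith)
    have hpow : (2 * β₁) ^ (1 - (n : ℝ)) ≤ dist x y ^ (1 - (n : ℝ)) :=
      Real.rpow_le_rpow_of_nonpos hd (by linarith) hn'
    have hdpos := Real.rpow_pos_of_pos hd (1 - (n : ℝ))
    calc t * Φ y = c₀⁻¹ * (2 * β₁) ^ (1 - (n : ℝ)) * Φ y / β₁ := by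
          rw [ht]
          ring
      _ ≤ c₀⁻¹ * dist x y ^ (1 - (n : ℝ)) * Φ y / infDist x (frontier Ω) := by
          gcongr
      _ ≤ Φ x * G x y / infDist x (frontier Ω) := by gcongr
      _ = Φ x / infDist x (frontier Ω) * G x y := by ring

/-- A measure with respect to which some positive function has finite integral is s-finite. -/
theorem sFinite_of_lintegral_ne_top {X : Type*} [MeasurableSpace X] {μ : Measure X}
    {f : X → ℝ≥0∞} (hf : AEMeasurable f μ) (hpos : ∀ᵐ x ∂μ, f x ≠ 0) (htop : ∀ᵐ x ∂μ, f x ≠ ⊤)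
    (hfin : ∫⁻ x, f x ∂μ ≠ ⊤) : SFinite μ := by
  have : IsFiniteMeasure (μ.withDensity f) := isFiniteMeasure_withDensity hfin
  rw [← withDensity_inv_same₀ hf hpos htop]
  infer_instance

/-- Estimates for a function `u` with `u + ∫ g dτ = ∫ k dν`, by integration against a weight. -/
theorem setLIntegral_estimates_of_representation {X : Type*} [MeasurableSpace X] {Ω F : Set X}
    (hΩ : MeasurableSet Ω) (hF : MeasurableSet F) {μ τ ν : Measure X} [SFinite (μ.restrict Ω)]
    [SFinite (τ.restrict Ω)] [SFinite (ν.restrict F)] {w u φ : X → ℝ≥0∞} {g k : X → X → ℝ≥0∞}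
    {a A c C : ℝ≥0∞} (hC : C ≠ ⊤) (hw : ∀ x ∈ Ω, w x ≠ ⊤)
    (hwu : AEMeasurable (fun x => w x * u x) (μ.restrict Ω))
    (hwg : AEMeasurable (Function.uncurry fun x y => w x * g x y)
      ((μ.restrict Ω).prod (τ.restrict Ω)))
    (hwk : AEMeasurable (Function.uncurry fun x y => w x * k x y)
      ((μ.restrict Ω).prod (ν.restrict F)))
    (hφ : AEMeasurable φ (τ.restrict Ω))
    (hrep : ∀ x ∈ Ω, u x + ∫⁻ y in Ω, g x y ∂τ = ∫⁻ y in F, k x y ∂ν)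
    (hk : ∀ y ∈ F, a ≤ ∫⁻ x in Ω, w x * k x y ∂μ ∧ ∫⁻ x in Ω, w x * k x y ∂μ ≤ A)
    (hg : ∀ y ∈ Ω, c * φ y ≤ ∫⁻ x in Ω, w x * g x y ∂μ ∧
      ∫⁻ x in Ω, w x * g x y ∂μ ≤ C * φ y) :
    a * ν F ≤ ∫⁻ x in Ω, w x * u x ∂μ + C * ∫⁻ y in Ω, φ y ∂τ ∧
      ∫⁻ x in Ω, w x * u x ∂μ ≤ A * ν F ∧ c * ∫⁻ y in Ω, φ y ∂τ ≤ A * ν F := by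
  have heq : ∫⁻ x in Ω, w x * u x ∂μ + ∫⁻ y in Ω, ∫⁻ x in Ω, w x * g x y ∂μ ∂τ =
      ∫⁻ y in F, ∫⁻ x in Ω, w x * k x y ∂μ ∂ν := by
    rw [← lintegral_lintegral_swap hwg, ← lintegral_lintegral_swap hwk, ← lintegral_add_left' hwu]
    refine setLIntegral_congr_fun hΩ fun x hx => ?_
    rw [lintegral_const_mul' _ _ (hw x hx), lintegral_const_mul' _ _ (hw x hx), ← mul_add,
      hrep x hx]
  have hklo : a * ν F ≤ ∫⁻ y in F, ∫⁻ x in Ω, w x * k x y ∂μ ∂ν := by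
    rw [← setLIntegral_const]
    exact setLIntegral_mono' hF fun y hy => (hk y hy).1
  have hkup : ∫⁻ y in F, ∫⁻ x in Ω, w x * k x y ∂μ ∂ν ≤ A * ν F := by
    rw [← setLIntegral_const]
    exact setLIntegral_mono' hF fun y hy => (hk y hy).2
  have hgup : ∫⁻ y in Ω, ∫⁻ x in Ω, w x * g x y ∂μ ∂τ ≤ C * ∫⁻ y in Ω, φ y ∂τ := by
    rw [← lintegral_const_mul' _ _ hC]
    exact setLIntegral_mono' hΩ fun y hy => (hg y hy).2
  have hglo : c * ∫⁻ y in Ω, φ y ∂τ ≤ ∫⁻ y in Ω, ∫⁻ x in Ω, w x * g x y ∂μ ∂τ := by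
    rw [← lintegral_const_mul'' _ hφ]
    exact setLIntegral_mono' hΩ fun y hy => (hg y hy).1
  rw [← heq] at hklo hkup
  exact ⟨hklo.trans (add_le_add le_rfl hgup), le_self_add.trans hkup,
    hglo.trans (le_add_self.trans hkup)⟩

/-- Two-sided estimates up to finite factors can be written with a single real constant. -/
theorem exists_real_const {a A c C s : ℝ≥0∞} (ha : a ≠ 0) (ha' : a ≠ ⊤) (hA : A ≠ ⊤) (hc : c ≠ 0)
    (hc' : c ≠ ⊤) (hC : C ≠ ⊤) (hs : s ≠ ⊤) :
    ∃ L : ℝ, 1 ≤ L ∧ ∀ v I J S : ℝ≥0∞, I ≤ s * J → J ≤ s * I → a * v ≤ I + C * S → I ≤ A * v →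
      c * S ≤ A * v → ENNReal.ofReal L⁻¹ * v ≤ J + S ∧ J + S ≤ ENNReal.ofReal L * v := by
  set P := s * A + c⁻¹ * A with hP
  set q := a⁻¹ * (s + C) with hq
  have hPt : P ≠ ⊤ := by finiteness
  have hqt : q ≠ ⊤ := by finiteness
  refine ⟨1 + P.toReal + q.toReal, ?_, fun v I J S hIJ hJI h1 h2 h3 => ⟨?_, ?_⟩⟩
  · have := P.toReal_nonneg
    have := q.toReal_nonneg
    linarith
  · have hv : v ≤ q * (J + S) := by
      calc v = a⁻¹ * (a * v) := by rw [← mul_assoc, ENNReal.inv_mul_cancel ha ha', one_mul]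
        _ ≤ a⁻¹ * (s * J + C * S) := by
          gcongr
          exact h1.trans (add_le_add hIJ le_rfl)
        _ ≤ a⁻¹ * ((s + C) * J + (s + C) * S) := by
          gcongr
          · exact le_self_add
          · exact le_add_self
        _ = q * (J + S) := by rw [hq, mul_assoc, mul_add (s + C)]
    have hL : 0 < 1 + P.toReal + q.toReal := by positivity
    calc ENNReal.ofReal (1 + P.toReal + q.toReal)⁻¹ * v
        ≤ ENNReal.ofReal (1 + P.toReal + q.toReal)⁻¹ * (q * (J + S)) := by gcongr
      _ ≤ ENNReal.ofReal (1 + P.toReal + q.toReal)⁻¹ *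
          (ENNReal.ofReal (1 + P.toReal + q.toReal) * (J + S)) := by
          gcongr
          rw [← ofReal_toReal hqt]
          refine ofReal_le_ofReal ?_
          have := P.toReal_nonneg
          rw [toReal_ofReal toReal_nonneg]
          linarith
      _ = J + S := by
          rw [← mul_assoc, ← ofReal_mul (by positivity), inv_mul_cancel₀ hL.ne', ofReal_one,
            one_mul]
  · have hS' : S ≤ c⁻¹ * A * v := by
      calc S = c⁻¹ * (c * S) := by rw [← mul_assoc, ENNReal.inv_mul_cancel hc hc', one_mul]
        _ ≤ c⁻¹ * (A * v) := by gcongr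
        _ = c⁻¹ * A * v := (mul_assoc _ _ _).symm
    calc J + S ≤ s * (A * v) + c⁻¹ * A * v := add_le_add (hJI.trans (by gcongr)) hS'
      _ = P * v := by rw [hP, add_mul, mul_assoc s]
      _ ≤ ENNReal.ofReal (1 + P.toReal + q.toReal) * v := by
          gcongr
          nth_rewrite 1 [← ofReal_toReal hPt]
          refine ofReal_le_ofReal ?_
          have := q.toReal_nonneg
          linarith

/-- Weights built from comparable functions are comparable. -/
theorem div_mul_comparison {P p d s t : ℝ} (hd : 0 < d) (hp : 0 < p) (hs : 1 ≤ s)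
    (hP : 0 ≤ P) (ht : 0 ≤ t) (h : s⁻¹ * d ≤ p ∧ p ≤ s * d) :
    P / p * t ≤ s * (P / d * t) ∧ P / d * t ≤ s * (P / p * t) := by
  have hs0 : 0 < s := by linarith
  have h1 : d ≤ s * p := by
    rw [← inv_mul_le_iff₀ hs0]
    exact h.1
  have h3 : p⁻¹ ≤ s * d⁻¹ := by
    rw [← div_eq_mul_inv, inv_le_iff_one_le_mul₀ hp, div_mul_eq_mul_div, one_le_div hd]
    exact h1
  have h4 : d⁻¹ ≤ s * p⁻¹ := by
    rw [← div_eq_mul_inv, inv_le_iff_one_le_mul₀ hd, div_mul_eq_mul_div, one_le_div hp]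
    exact h.2
  constructor
  · calc P / p * t = P * t * p⁻¹ := by ring
      _ ≤ P * t * (s * d⁻¹) := by gcongr
      _ = s * (P / d * t) := by ring
  · calc P / d * t = P * t * d⁻¹ := by ring
      _ ≤ P * t * (s * p⁻¹) := by gcongr
      _ = s * (P / p * t) := by ring

/-- The frontier of a nonempty bounded set in a Euclidean space of positive dimension is
nonempty. -/
theorem frontier_nonempty_of_isBounded {n : ℕ} {Ω : Set (EuclideanSpace ℝ (Fin (n + 1)))}
    (hb : Bornology.IsBounded Ω) (hΩ : Ω.Nonempty) : (frontier Ω).Nonempty := by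
  rw [nonempty_iff_ne_empty, ne_eq, frontier_eq_empty_iff, not_or]
  refine ⟨hΩ.ne_empty, fun h => ?_⟩
  rw [h] at hb
  exact NormedSpace.unbounded_univ ℝ (EuclideanSpace ℝ (Fin (n + 1))) hb

theorem stmt7 {N : ℕ} (hN : 3 ≤ N) (Ω : Set (EuclideanSpace ℝ (Fin N)))
    (hΩo : IsOpen Ω) (hΩb : Bornology.IsBounded Ω) (hΩ2 : HasC2Boundary Ω)
    (α αs : ℝ) (hα : 0 < α - 1/2) (hαs : α - 1/2 < αs) (hαs' : αs ≤ α)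
    (Φ Φ₀ : EuclideanSpace ℝ (Fin N) → ℝ)
    (G : EuclideanSpace ℝ (Fin N) → EuclideanSpace ℝ (Fin N) → ℝ)
    (K : EuclideanSpace ℝ (Fin N) → EuclideanSpace ℝ (Fin N) → ℝ)
    (hGm : Measurable (Function.uncurry G))
    (hGpos : ∀ x ∈ Ω, ∀ y ∈ Ω, x ≠ y → 0 < G x y)
    (a c₀ β₁ : ℝ) (ha : 2 ≤ a) (hc₀ : 1 ≤ c₀) (hβ₁ : 0 < β₁)
    -- (H1): two-sided boundary Green estimate near the diagonal
    (hG1 : ∀ β ∈ Set.Ioo (0:ℝ) β₁, ∀ x ∈ Ω, Metric.infDist x (frontier Ω) = β →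
      ∀ y ∈ Ω, 0 < dist x y → dist x y < a * β →
        c₀⁻¹ * dist x y ^ ((2:ℝ) - N) * Φ y ≤ Φ x * G x y ∧
        Φ x * G x y ≤ c₀ * dist x y ^ ((2:ℝ) - N) * Φ y)
    -- (H2): upper boundary Green estimate away from the diagonal
    (hG2 : ∀ β ∈ Set.Ioo (0:ℝ) β₁, ∀ x ∈ Ω, Metric.infDist x (frontier Ω) = β →
      ∀ y ∈ Ω, a * β ≤ dist x y →
        Φ x * G x y ≤ c₀ * β ^ (2 * αs) * dist x y ^ ((2:ℝ) - N - 2 * α) * Φ y)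
    -- (H3): two-sided interior Green estimate
    (hG3 : ∀ b : ℝ, 0 < b → ∃ Cb : ℝ, 1 ≤ Cb ∧ ∀ x ∈ Ω, ∀ y ∈ Ω,
      0 < dist x y →
      dist x y ≤ b⁻¹ * min (Metric.infDist x (frontier Ω)) (Metric.infDist y (frontier Ω)) →
      Cb⁻¹ * dist x y ^ ((2:ℝ) - N) ≤ G x y ∧ G x y ≤ Cb * dist x y ^ ((2:ℝ) - N))
    -- (H4): symmetry and comparison with the ground state near the boundary
    (hGsym : ∀ x ∈ Ω, ∀ y ∈ Ω, G x y = G y x)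
    (hG4 : ∀ r : ℝ, 0 < r → ∃ Cr : ℝ, 0 < Cr ∧ ∀ x ∈ Ω, ∀ y ∈ Ω,
      r ≤ Metric.infDist y (frontier Ω) → Metric.infDist x (frontier Ω) < r / 2 →
      G x y ≤ Cr * Φ x)
    -- (H5): condition (B2) on the ground state
    (hΦc : ContinuousOn Φ Ω) (hΦpos : ∀ x ∈ Ω, 0 < Φ x)
    (c₁ : ℝ) (hc₁ : 1 ≤ c₁)
    (hΦ : ∀ x ∈ Ω, Metric.infDist x (frontier Ω) < β₁ →
      c₁⁻¹ * Metric.infDist x (frontier Ω) ^ α ≤ Φ x ∧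
      Φ x ≤ c₁ * Metric.infDist x (frontier Ω) ^ αs)
    -- (H6): `Φ₀ ∼ δ`
    (cs : ℝ) (hcs : 1 ≤ cs)
    (hΦ₀ : ∀ x ∈ Ω, cs⁻¹ * Metric.infDist x (frontier Ω) ≤ Φ₀ x ∧
      Φ₀ x ≤ cs * Metric.infDist x (frontier Ω))
    (hΦ₀pos : ∀ x ∈ Ω, 0 < Φ₀ x)
    -- (H7): Martin kernel bound
    (hKc : ContinuousOn (Function.uncurry K) (Ω ×ˢ frontier Ω))
    (hKpos : ∀ x ∈ Ω, ∀ y ∈ frontier Ω, 0 < K x y)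
    (C₀ ε : ℝ) (hC₀ : 1 ≤ C₀) (hε : 0 < ε)
    (hKbound : ∀ y ∈ frontier Ω, ∀ β ∈ Set.Ioo (0:ℝ) ε,
      ENNReal.ofReal C₀⁻¹ ≤
        (∫⁻ x in {x ∈ Ω | Metric.infDist x (frontier Ω) = β},
          ENNReal.ofReal (Φ x / Φ₀ x * K x y) ∂(μH[(N:ℝ) - 1])) ∧
      (∫⁻ x in {x ∈ Ω | Metric.infDist x (frontier Ω) = β},
          ENNReal.ofReal (Φ x / Φ₀ x * K x y) ∂(μH[(N:ℝ) - 1])) ≤ ENNReal.ofReal C₀) :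
    -- conclusion: two-sided weighted estimate of a subharmonic `u` with `u + G[τ] = K[ν]`
    ∃ C : ℝ, 1 ≤ C ∧
      ∀ (τ ν : Measure (EuclideanSpace ℝ (Fin N))), τ Ωᶜ = 0 →
        (∫⁻ x in Ω, ENNReal.ofReal (Φ x) ∂τ) < ⊤ →
        IsFiniteMeasure ν → ν (frontier Ω)ᶜ = 0 →
        ∀ u : EuclideanSpace ℝ (Fin N) → ℝ, Measurable u → (∀ x ∈ Ω, 0 ≤ u x) →
          (∀ x ∈ Ω, ENNReal.ofReal (u x) + (∫⁻ y in Ω, ENNReal.ofReal (G x y) ∂τ) =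
            (∫⁻ y in frontier Ω, ENNReal.ofReal (K x y) ∂ν)) →
          ENNReal.ofReal C⁻¹ * ν (frontier Ω) ≤
            (∫⁻ x in Ω, ENNReal.ofReal (Φ x / Φ₀ x * u x) ∂volume) +
              (∫⁻ x in Ω, ENNReal.ofReal (Φ x) ∂τ) ∧
          (∫⁻ x in Ω, ENNReal.ofReal (Φ x / Φ₀ x * u x) ∂volume) +
              (∫⁻ x in Ω, ENNReal.ofReal (Φ x) ∂τ) ≤
            ENNReal.ofReal C * ν (frontier Ω) := by
  obtain ⟨n, rfl⟩ : ∃ n, N = n + 1 := ⟨N - 1, by omega⟩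
  have hn : 1 ≤ n := by omega
  have hcast1 : ((n + 1 : ℕ) : ℝ) - 1 = n := by
    push_cast
    ring
  have hcast2 : (2 : ℝ) - ((n + 1 : ℕ) : ℝ) = 1 - n := by
    push_cast
    ring
  rw [hcast1] at hKbound
  rw [hcast2] at hG1 hG2 hG3
  rcases Ω.eq_empty_or_nonempty with rfl | hΩne
  · exact ⟨1, le_rfl, fun τ ν _ _ _ _ u _ _ _ => by simp⟩
  have hne := frontier_nonempty_of_isBounded hΩb hΩne
  have hδpos : ∀ x ∈ Ω, 0 < infDist x (frontier Ω) := fun x hx => infDist_frontier_pos hΩo hne hx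
  have hδc : Continuous fun x => infDist x (frontier Ω) := continuous_infDist_pt _
  have hΩm := hΩo.measurableSet
  have hcs0 : 0 < cs := by linarith
  have hwc : ContinuousOn (fun x => Φ x / infDist x (frontier Ω)) Ω :=
    hΦc.div hδc.continuousOn fun x hx => (hδpos x hx).ne'
  have hwnn : ∀ x ∈ Ω, 0 ≤ Φ x / infDist x (frontier Ω) := fun x hx =>
    div_nonneg (hΦpos x hx).le (hδpos x hx).le
  have hcomp : ∀ x ∈ Ω, ∀ t : ℝ, 0 ≤ t →
      ENNReal.ofReal (Φ x / Φ₀ x * t) ≤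
        ENNReal.ofReal cs * ENNReal.ofReal (Φ x / infDist x (frontier Ω) * t) ∧
      ENNReal.ofReal (Φ x / infDist x (frontier Ω) * t) ≤
        ENNReal.ofReal cs * ENNReal.ofReal (Φ x / Φ₀ x * t) := fun x hx t ht => by
    have h := div_mul_comparison (hδpos x hx) (hΦ₀pos x hx) hcs (hΦpos x hx).le ht (hΦ₀ x hx)
    rw [← ofReal_mul hcs0.le, ← ofReal_mul hcs0.le]
    exact ⟨ofReal_le_ofReal h.1, ofReal_le_ofReal h.2⟩
  have hlev : ∀ β, MeasurableSet (Ω ∩ {x | infDist x (frontier Ω) = β}) := fun β =>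
    hΩm.inter (measurableSet_eq_fun hδc.measurable measurable_const)
  have hwKc : ContinuousOn (Function.uncurry fun x y => Φ x / infDist x (frontier Ω) * K x y)
      (Ω ×ˢ frontier Ω) :=
    (hwc.comp continuousOn_fst fun q hq => hq.1).mul hKc
  obtain ⟨a', A, ha', hA, hK⟩ := hΩ2.exists_setLIntegral_kernel hΩo hΩb hne hn hwKc
    (c := (ENNReal.ofReal cs)⁻¹ * ENNReal.ofReal C₀⁻¹)
    (C := ENNReal.ofReal cs * ENNReal.ofReal C₀)
    (mul_ne_zero (ENNReal.inv_ne_zero.2 ofReal_ne_top) (by simp; linarith)) (by finiteness) hε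
    fun y hy β hβ => by
      obtain ⟨h1, h2⟩ := hKbound y hy β hβ
      refine ⟨?_, ?_⟩
      · rw [mul_comm, ← div_eq_mul_inv]
        refine ENNReal.div_le_of_le_mul' (h1.trans ?_)
        rw [← lintegral_const_mul' _ _ ofReal_ne_top]
        exact setLIntegral_mono' (hlev β) fun x hx => (hcomp x hx.1 _ (hKpos x hx.1 y hy).le).1
      · refine le_trans ?_ (mul_le_mul_right h2 _)
        rw [← lintegral_const_mul' _ _ ofReal_ne_top]
        exact setLIntegral_mono' (hlev β) fun x hx => (hcomp x hx.1 _ (hKpos x hx.1 y hy).le).2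
  obtain ⟨C, hC, hGup⟩ := hΩ2.exists_setLIntegral_green_le hΩo hΩb hne hn hα hαs hαs' hΦc hΦpos ha
    hc₀ hβ₁ (fun x hx hxβ y hy hd hda => (hG1 _ ⟨hδpos x hx, hxβ⟩ x hx rfl y hy hd hda).2)
    (fun x hx hxβ y hy hd => hG2 _ ⟨hδpos x hx, hxβ⟩ x hx rfl y hy hd)
    (fun b hb => by
      obtain ⟨Cb, hCb, h⟩ := hG3 b hb
      exact ⟨Cb, hCb, fun x hx y hy h1 h2 => (h x hx y hy h1 h2).2⟩) hGsym hG4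
  obtain ⟨Cb, hCb, hG3'⟩ := hG3 1 one_pos
  obtain ⟨c, hc, hGlo⟩ := hΩ2.exists_le_setLIntegral_green hΩo hΩb hne hn hΦc hΦpos ha
    hc₀ hβ₁ (fun x hx hxβ y hy hd hda => (hG1 _ ⟨hδpos x hx, hxβ⟩ x hx rfl y hy hd hda).1) hCb
    (fun x hx y hy h1 h2 => (hG3' x hx y hy h1 (by rwa [inv_one, one_mul])).1)
  have ha'top : a' ≠ ⊤ := by
    obtain ⟨y, hy⟩ := hne
    exact ne_top_of_le_ne_top hA ((hK y hy).1.trans (hK y hy).2)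
  obtain ⟨L, hL, hLest⟩ := exists_real_const (c := min c 1) (s := ENNReal.ofReal cs) ha' ha'top hA
    (lt_min (pos_iff_ne_zero.2 hc) one_pos).ne'
    (ne_top_of_le_ne_top one_ne_top (min_le_right _ _)) hC ofReal_ne_top
  refine ⟨L, hL, fun τ ν _ hτ hν _ u hu hu0 hrep => ?_⟩
  have hφm : AEMeasurable (fun x => ENNReal.ofReal (Φ x)) (τ.restrict Ω) :=
    (hΦc.aemeasurable hΩm).ennreal_ofReal
  have : SFinite (τ.restrict Ω) := by
    refine sFinite_of_lintegral_ne_top hφm ?_ (.of_forall fun x => ofReal_ne_top) hτ.ne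
    filter_upwards [ae_restrict_mem hΩm] with x hx
    simpa using hΦpos x hx
  set w : EuclideanSpace ℝ (Fin (n + 1)) → ℝ≥0∞ :=
    fun x => ENNReal.ofReal (Φ x / infDist x (frontier Ω)) with hw
  have hwmul : ∀ x ∈ Ω, ∀ t : ℝ, w x * ENNReal.ofReal t =
      ENNReal.ofReal (Φ x / infDist x (frontier Ω) * t) := fun x hx t =>
    (ofReal_mul (hwnn x hx)).symm
  have hwm : AEMeasurable w (volume.restrict Ω) := (hwc.aemeasurable hΩm).ennreal_ofReal
  have hweight : ∀ f : EuclideanSpace ℝ (Fin (n + 1)) → ℝ, ∫⁻ x in Ω, w x * ENNReal.ofReal (f x) =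
      ∫⁻ x in Ω, ENNReal.ofReal (Φ x / infDist x (frontier Ω) * f x) := fun f =>
    setLIntegral_congr_fun hΩm fun x hx => hwmul x hx (f x)
  obtain ⟨h1, h2, h3⟩ := setLIntegral_estimates_of_representation (μ := volume) (τ := τ) (ν := ν)
    (w := w) (u := fun x => ENNReal.ofReal (u x)) (φ := fun x => ENNReal.ofReal (Φ x))
    (g := fun x y => ENNReal.ofReal (G x y)) (k := fun x y => ENNReal.ofReal (K x y))
    (a := a') (A := A) (c := min c 1) (C := C)
    hΩm measurableSet_frontier hC (fun x _ => ofReal_ne_top)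
    (hwm.mul hu.ennreal_ofReal.aemeasurable)
    ((hwm.comp_fst).mul hGm.ennreal_ofReal.aemeasurable)
    ((hwm.comp_fst).mul (by
      rw [Measure.prod_restrict]
      exact (hKc.aemeasurable (hΩm.prod measurableSet_frontier)).ennreal_ofReal))
    hφm hrep
    (fun y hy => by
      rw [hweight fun x => K x y]
      exact hK y hy)
    (fun y hy => by
      rw [hweight fun x => G x y]
      exact ⟨le_trans (mul_le_mul_left (min_le_left _ _) _) (hGlo y hy), hGup y hy⟩)
  rw [hweight u] at h1 h2
  refine hLest _ _ _ _ ?_ ?_ h1 h2 h3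
  · rw [← lintegral_const_mul' _ _ ofReal_ne_top]
    exact setLIntegral_mono' hΩm fun x hx => (hcomp x hx _ (hu0 x hx)).2
  · rw [← lintegral_const_mul' _ _ ofReal_ne_top]
    exact setLIntegral_mono' hΩm fun x hx => (hcomp x hx _ (hu0 x hx)).1
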